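/- arXiv:1210.0098 — 6 statements merged into one kernel-verified Lean document; each statement's English description precedes it below -/
import Mathlib

section
/- (Gordon's strong force lemma.) Let V : ℝ^n \ {0} → ℝ be continuous with V(x) ≤ 0 for all x ≠ 0, and suppose V satisfies the strong force condition: there exist r₀ > 0 and a continuously differentiable function U on {x : 0 < |x| < r₀} such that U(x) → −∞ as |x| → 0 and −V(x) ≥ |∇U(x)|² for all 0 < |x| < r₀. Let x_k : ℝ → ℝ^n be continuously differentiable 1-periodic curves with x_k(t) ≠ 0 for all t, and let x : ℝ → ℝ^n be a continuous 1-periodic curve, such that x_k → x uniformly on [0,1] and ∫₀¹ |ẋ_k(t)|² dt ≤ M for all k and some constant M. If there exist t₀ with x(t₀) = 0 and t₁ with x(t₁) ≠ 0, then ∫₀¹ V(x_k(t)) dt → −∞ as k → ∞. -/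
/-!
While a curve `y` stays in a region where the strong force condition holds,
`(U ∘ y)' ≤ ‖DU(y)‖ ‖y'‖ ≤ ‖DU(y)‖² + ‖y'‖² ≤ -V(y) + ‖y'‖²`,
so the increase of `U` along `y` is at most `-∫ V(y) + ∫ ‖y'‖²`. Let `x` be at the singularity at
time `a`, and let `c` be the first later time at which `‖x‖` reaches a small level `ρ > 0`. By
uniform convergence the curves `x_k` stay in the region on `[a, c]` for large `k`, and there
`U (x_k c) - U (x_k a) → ∞`, because `U (x_k c)` converges to `U (x c)` while `U (x_k a) → -∞`.
As the kinetic energies are bounded, `∫ V(x_k) → -∞`. No sphere needs to be compact, so the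
dimension may be infinite.
-/

open Set Filter Topology

theorem exists_eq_and_forall_Icc_le {α δ : Type*} [ConditionallyCompleteLinearOrder α]
    [TopologicalSpace α] [OrderTopology α] [DenselyOrdered α] [LinearOrder δ] [TopologicalSpace δ]
    [OrderClosedTopology δ] {f : α → δ} {a b : α} {d : δ} (hab : a ≤ b)
    (hf : ContinuousOn f (Icc a b)) (ha : f a ≤ d) (hb : d ≤ f b) :
    ∃ c ∈ Icc a b, f c = d ∧ ∀ t ∈ Icc a c, f t ≤ d := by
  have hcompact : IsCompact (Icc a b ∩ f ⁻¹' {d}) :=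
    isCompact_Icc.of_isClosed_subset (hf.preimage_isClosed_of_isClosed isClosed_Icc
      isClosed_singleton) inter_subset_left
  obtain ⟨c, ⟨hc, hcd⟩, hleast⟩ := hcompact.exists_isLeast (intermediate_value_Icc hab hf ⟨ha, hb⟩)
  refine ⟨c, hc, hcd, fun t ht => le_of_not_gt fun hdt => hdt.ne' ?_⟩
  have hsub : Icc a t ⊆ Icc a b := Icc_subset_Icc_right (ht.2.trans hc.2)
  obtain ⟨u, hu, hud⟩ := intermediate_value_Icc ht.1 (hf.mono hsub) ⟨ha, hdt.le⟩
  have htc : t = c := le_antisymm ht.2 ((hleast ⟨hsub hu, hud⟩).trans hu.2)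
  exact htc ▸ hcd

theorem exists_ne_zero_norm_lt_and_forall_Icc_norm_le {α E : Type*}
    [ConditionallyCompleteLinearOrder α] [TopologicalSpace α] [OrderTopology α] [DenselyOrdered α]
    [NormedAddCommGroup E] {x : α → E} {a b : α} {r : ℝ} (hr : 0 < r) (hab : a ≤ b)
    (hx : ContinuousOn x (Icc a b)) (ha : x a = 0) (hb : x b ≠ 0) :
    ∃ c ∈ Icc a b, x c ≠ 0 ∧ ‖x c‖ < r ∧ ∀ t ∈ Icc a c, ‖x t‖ ≤ ‖x c‖ := by
  obtain ⟨ρ, hρ, hρ_lt⟩ := exists_between (lt_min hr (norm_pos_iff.2 hb))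
  obtain ⟨hρr, hρb⟩ := lt_min_iff.1 hρ_lt
  obtain ⟨c, hc, rfl, hle⟩ := exists_eq_and_forall_Icc_le hab hx.norm
    (by simpa only [ha, norm_zero] using hρ.le) hρb.le
  exact ⟨c, hc, norm_pos_iff.1 hρ, hρr, hle⟩

theorem eventually_forall_norm_lt_of_tendstoUniformlyOn {α ι E : Type*} [SeminormedAddCommGroup E]
    {F : ι → α → E} {f : α → E} {l : Filter ι} {s : Set α} {ρ r : ℝ}
    (h : TendstoUniformlyOn F f l s) (hf : ∀ t ∈ s, ‖f t‖ ≤ ρ) (hρ : ρ < r) :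
    ∀ᶠ k in l, ∀ t ∈ s, ‖F k t‖ < r := by
  filter_upwards [Metric.tendstoUniformlyOn_iff.1 h (r - ρ) (sub_pos.2 hρ)] with k hk t ht
  have hdist : ‖F k t - f t‖ < r - ρ := by simpa only [dist_comm, dist_eq_norm] using hk t ht
  linarith [norm_le_norm_add_norm_sub' (F k t) (f t), hf t ht]

theorem tendstoUniformly_of_periodic {α β ι : Type*} [AddCommGroup α] [LinearOrder α]
    [IsOrderedAddMonoid α] [Archimedean α] [UniformSpace β] {F : ι → α → β} {f : α → β}
    {l : Filter ι} {T : α} (hT : 0 < T) (hF : ∀ k, (F k).Periodic T) (hf : f.Periodic T)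
    (h : TendstoUniformlyOn F f l (Icc 0 T)) : TendstoUniformly F f l := by
  intro u hu
  filter_upwards [h u hu] with k hk t
  have hpair : Function.Periodic (fun s => (f s, F k s)) T := fun s => Prod.ext (hf s) (hF k s)
  obtain ⟨s, hs, hts⟩ := hpair.exists_mem_Ico₀ hT t
  exact hts ▸ hk s (Ico_subset_Icc_self hs)

theorem periodic_deriv {𝕜 F : Type*} [NontriviallyNormedField 𝕜] [NormedAddCommGroup F]
    [NormedSpace 𝕜 F] {f : 𝕜 → F} {T : 𝕜} (hf : f.Periodic T) : (deriv f).Periodic T := fun t => by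
  rw [← deriv_comp_add_const, hf.funext]

theorem norm_gradient {𝕜 F : Type*} [RCLike 𝕜] [NormedAddCommGroup F] [InnerProductSpace 𝕜 F]
    [CompleteSpace F] (f : F → 𝕜) (ξ : F) : ‖gradient f ξ‖ = ‖fderiv 𝕜 f ξ‖ :=
  LinearIsometryEquiv.norm_map _ _

section NormedSpace

variable {E : Type*} [NormedAddCommGroup E] [NormedSpace ℝ E]

theorem apply_le_sq_norm_add_sq_norm (φ : E →L[ℝ] ℝ) (v : E) : φ v ≤ ‖φ‖ ^ 2 + ‖v‖ ^ 2 := by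
  have hφv : φ v ≤ ‖φ‖ * ‖v‖ := (le_abs_self _).trans (φ.le_opNorm v)
  linarith [two_mul_le_add_sq ‖φ‖ ‖v‖, mul_nonneg (norm_nonneg φ) (norm_nonneg v)]

theorem sub_le_integral_neg_add_sq_norm_deriv {V U : E → ℝ} {y : ℝ → E} {a c : ℝ} (hac : a ≤ c)
    (hV : ContinuousOn (fun t => V (y t)) (Icc a c)) (hy : ContDiff ℝ 1 y)
    (hU : ∀ t ∈ Icc a c, DifferentiableAt ℝ U (y t))
    (hUV : ∀ t ∈ Icc a c, ‖fderiv ℝ U (y t)‖ ^ 2 ≤ -V (y t)) :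
    U (y c) - U (y a) ≤ ∫ t in a..c, (-V (y t) + ‖deriv y t‖ ^ 2) := by
  have hderiv : ∀ t ∈ Icc a c,
      HasDerivAt (fun s => U (y s)) (fderiv ℝ U (y t) (deriv y t)) t := fun t ht =>
    (hU t ht).hasFDerivAt.comp_hasDerivAt t (hy.differentiable one_ne_zero t).hasDerivAt
  have hcont : ContinuousOn (fun t => -V (y t) + ‖deriv y t‖ ^ 2) (Icc a c) :=
    hV.neg.add ((hy.continuous_deriv le_rfl).norm.pow 2).continuousOn
  refine intervalIntegral.sub_le_integral_of_hasDeriv_right_of_le hac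
    (fun t ht => (hderiv t ht).continuousAt.continuousWithinAt)
    (fun t ht => (hderiv t (Ioo_subset_Icc_self ht)).hasDerivWithinAt)
    hcont.integrableOn_Icc fun t ht => ?_
  calc fderiv ℝ U (y t) (deriv y t)
      ≤ ‖fderiv ℝ U (y t)‖ ^ 2 + ‖deriv y t‖ ^ 2 := apply_le_sq_norm_add_sq_norm _ _
    _ ≤ -V (y t) + ‖deriv y t‖ ^ 2 := by gcongr; exact hUV t (Ioo_subset_Icc_self ht)

theorem integral_le_sub_add_integral_sq_norm_deriv {V U : E → ℝ} {y : ℝ → E} {a b c : ℝ}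
    (hc : c ∈ Icc a b) (hV : ContinuousOn (fun t => V (y t)) (Icc a b))
    (hV_nonpos : ∀ t ∈ Icc a b, V (y t) ≤ 0) (hy : ContDiff ℝ 1 y)
    (hU : ∀ t ∈ Icc a c, DifferentiableAt ℝ U (y t))
    (hUV : ∀ t ∈ Icc a c, ‖fderiv ℝ U (y t)‖ ^ 2 ≤ -V (y t)) :
    ∫ t in a..b, V (y t) ≤ U (y a) - U (y c) + ∫ t in a..b, ‖deriv y t‖ ^ 2 := by
  have hab : a ≤ b := hc.1.trans hc.2
  have hVint : IntervalIntegrable (fun t => -V (y t)) MeasureTheory.volume a b :=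
    hV.neg.intervalIntegrable_of_Icc hab
  have hyint : IntervalIntegrable (fun t => ‖deriv y t‖ ^ 2) MeasureTheory.volume a b :=
    ((hy.continuous_deriv le_rfl).norm.pow 2).intervalIntegrable a b
  have hincrease : U (y c) - U (y a) ≤ -(∫ t in a..b, V (y t)) + ∫ t in a..b, ‖deriv y t‖ ^ 2 :=
    calc U (y c) - U (y a)
        ≤ ∫ t in a..c, (-V (y t) + ‖deriv y t‖ ^ 2) :=
          sub_le_integral_neg_add_sq_norm_deriv hc.1 (hV.mono (Icc_subset_Icc_right hc.2)) hy hU hUV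
      _ ≤ ∫ t in a..b, (-V (y t) + ‖deriv y t‖ ^ 2) := by
          refine intervalIntegral.integral_mono_interval le_rfl hc.1 hc.2 ?_ (hVint.add hyint)
          filter_upwards [MeasureTheory.ae_restrict_mem measurableSet_Ioc] with t ht
          exact add_nonneg (neg_nonneg.2 (hV_nonpos t (Ioc_subset_Icc_self ht))) (sq_nonneg _)
      _ = -(∫ t in a..b, V (y t)) + ∫ t in a..b, ‖deriv y t‖ ^ 2 := by
          rw [intervalIntegral.integral_add hVint hyint, intervalIntegral.integral_neg]
  linarith

/-- Gordon's strong force condition for a potential with a singularity at the origin. The bound is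
on the dual norm of the derivative of `U`, so that no inner product is needed, and `U` is only
required to be differentiable. The punctured ball on which `U` is considered is encoded by the
filter `𝓝[≠] 0`. -/
def IsStrongForce (V : E → ℝ) : Prop :=
  ∃ U : E → ℝ, Tendsto U (𝓝[≠] 0) atBot ∧
    ∀ᶠ ξ in 𝓝[≠] 0, DifferentiableAt ℝ U ξ ∧ ‖fderiv ℝ U ξ‖ ^ 2 ≤ -V ξ

variable {V : E → ℝ} {ι : Type*} {l : Filter ι} {y : ι → ℝ → E} {x : ℝ → E}

theorem IsStrongForce.tendsto_integral_atBot (h : IsStrongForce V) (hV : ContinuousOn V {0}ᶜ)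
    (hV_nonpos : ∀ ξ, ξ ≠ 0 → V ξ ≤ 0) {a b s M : ℝ} (hy : ∀ k, ContDiff ℝ 1 (y k))
    (hy_ne : ∀ k, ∀ t ∈ Icc a b, y k t ≠ 0) (hlim : TendstoUniformlyOn y x l (Icc a b))
    (hM : ∀ k, ∫ t in a..b, ‖deriv (y k) t‖ ^ 2 ≤ M)
    (hxa : x a = 0) (hs : s ∈ Icc a b) (hxs : x s ≠ 0) :
    Tendsto (fun k => ∫ t in a..b, V (y k t)) l atBot := by
  obtain rfl | _ := l.eq_or_neBot
  · exact tendsto_bot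
  obtain ⟨U, hU_atBot, hU⟩ := h
  obtain ⟨r, hr, hball⟩ := Metric.mem_nhdsWithin_iff.1 hU
  have hU_ball : ∀ ξ : E, ξ ≠ 0 → ‖ξ‖ < r →
      DifferentiableAt ℝ U ξ ∧ ‖fderiv ℝ U ξ‖ ^ 2 ≤ -V ξ := fun ξ hξ hξr =>
    hball ⟨mem_ball_zero_iff.2 hξr, hξ⟩
  have hx : ContinuousOn x (Icc a b) :=
    hlim.continuousOn (Frequently.of_forall fun k => (hy k).continuous.continuousOn)
  obtain ⟨c, hc, hxc, hxcr, hx_le⟩ := exists_ne_zero_norm_lt_and_forall_Icc_norm_le hr hs.1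
    (hx.mono (Icc_subset_Icc_right hs.2)) hxa hxs
  have hcb : c ∈ Icc a b := ⟨hc.1, hc.2.trans hs.2⟩
  have ha : a ∈ Icc a b := left_mem_Icc.2 (hs.1.trans hs.2)
  have hUa : Tendsto (fun k => U (y k a)) l atBot :=
    hU_atBot.comp <| tendsto_nhdsWithin_iff.2
      ⟨hxa ▸ hlim.tendsto_at ha, Eventually.of_forall fun k => hy_ne k a ha⟩
  have hUc : Tendsto (fun k => U (y k c)) l (𝓝 (U (x c))) :=
    (hU_ball (x c) hxc hxcr).1.continuousAt.tendsto.comp (hlim.tendsto_at hcb)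
  have hbound : Tendsto (fun k => U (y k a) - U (y k c) + M) l atBot :=
    tendsto_atBot_add_const_right l M (by simpa only [sub_eq_add_neg] using hUa.atBot_add hUc.neg)
  refine tendsto_atBot_mono' l ?_ hbound
  filter_upwards [eventually_forall_norm_lt_of_tendstoUniformlyOn
    (hlim.mono (Icc_subset_Icc_right hcb.2)) hx_le hxcr] with k hk
  have hU_curve : ∀ t ∈ Icc a c,
      DifferentiableAt ℝ U (y k t) ∧ ‖fderiv ℝ U (y k t)‖ ^ 2 ≤ -V (y k t) := fun t ht =>
    hU_ball _ (hy_ne k t (Icc_subset_Icc_right hcb.2 ht)) (hk t ht)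
  calc ∫ t in a..b, V (y k t)
      ≤ U (y k a) - U (y k c) + ∫ t in a..b, ‖deriv (y k) t‖ ^ 2 :=
        integral_le_sub_add_integral_sq_norm_deriv hcb
          (hV.comp (hy k).continuous.continuousOn (hy_ne k))
          (fun t ht => hV_nonpos _ (hy_ne k t ht)) (hy k)
          (fun t ht => (hU_curve t ht).1) (fun t ht => (hU_curve t ht).2)
    _ ≤ U (y k a) - U (y k c) + M := by gcongr; exact hM k

theorem gordon_strong_force_lemma_general (hV : ContinuousOn V {0}ᶜ)
    (hV_nonpos : ∀ ξ, ξ ≠ 0 → V ξ ≤ 0) (hstrong : IsStrongForce V) {T M : ℝ} (hT : 0 < T)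
    (hy : ∀ k, ContDiff ℝ 1 (y k)) (hy_per : ∀ k, (y k).Periodic T) (hy_ne : ∀ k t, y k t ≠ 0)
    (hx_per : x.Periodic T) (hlim : TendstoUniformlyOn y x l (Icc 0 T))
    (hM : ∀ k, ∫ t in 0..T, ‖deriv (y k) t‖ ^ 2 ≤ M)
    {t₀ t₁ : ℝ} (ht₀ : x t₀ = 0) (ht₁ : x t₁ ≠ 0) :
    Tendsto (fun k => ∫ t in 0..T, V (y k t)) l atBot := by
  have integral_shift : ∀ {g : ℝ → ℝ}, g.Periodic T →
      ∫ t in t₀..t₀ + T, g t = ∫ t in 0..T, g t := fun hg => by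
    simpa only [zero_add] using hg.intervalIntegral_add_eq t₀ 0
  obtain ⟨s, hs, hxs⟩ := hx_per.exists_mem_Ico hT t₁ t₀
  have hlim' : TendstoUniformlyOn y x l (Icc t₀ (t₀ + T)) :=
    (tendstoUniformly_of_periodic hT hy_per hx_per hlim).tendstoUniformlyOn
  have hM' : ∀ k, ∫ t in t₀..t₀ + T, ‖deriv (y k) t‖ ^ 2 ≤ M := fun k =>
    (integral_shift ((periodic_deriv (hy_per k)).comp (‖·‖ ^ 2))).trans_le (hM k)
  have hV_shift : ∀ k, ∫ t in t₀..t₀ + T, V (y k t) = ∫ t in 0..T, V (y k t) := fun k =>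
    integral_shift ((hy_per k).comp V)
  simpa only [hV_shift] using
    hstrong.tendsto_integral_atBot hV hV_nonpos hy (fun k t _ => hy_ne k t) hlim' hM' ht₀
      (Ico_subset_Icc_self hs) (hxs ▸ ht₁)

end NormedSpace

theorem isStrongForce_of_gradient {E : Type*} [NormedAddCommGroup E] [InnerProductSpace ℝ E]
    [CompleteSpace E] {V U : E → ℝ} {r : ℝ} (hr : 0 < r)
    (hU : DifferentiableOn ℝ U {ξ | 0 < ‖ξ‖ ∧ ‖ξ‖ < r}) (hU_atBot : Tendsto U (𝓝[≠] 0) atBot)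
    (hU_dom : ∀ ξ : E, 0 < ‖ξ‖ → ‖ξ‖ < r → ‖gradient U ξ‖ ^ 2 ≤ -V ξ) : IsStrongForce V := by
  have hopen : IsOpen {ξ : E | 0 < ‖ξ‖ ∧ ‖ξ‖ < r} :=
    (isOpen_lt continuous_const continuous_norm).inter (isOpen_lt continuous_norm continuous_const)
  refine ⟨U, hU_atBot, Metric.mem_nhdsWithin_iff.2 ⟨r, hr, fun ξ hξ => ?_⟩⟩
  have hmem : 0 < ‖ξ‖ ∧ ‖ξ‖ < r := ⟨norm_pos_iff.2 hξ.2, mem_ball_zero_iff.1 hξ.1⟩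
  exact ⟨hU.differentiableAt (hopen.mem_nhds hmem),
    norm_gradient U ξ ▸ hU_dom ξ hmem.1 hmem.2⟩

/-- **Gordon's strong force lemma**. If `V ≤ 0` satisfies the strong force condition and
`x_k` are 1-periodic non-collision C¹ curves with bounded kinetic energy converging
uniformly on `[0,1]` to a curve `x` which touches the singularity (but is not identically
at it), then `∫₀¹ V(x_k) → -∞`. -/
theorem gordon_strong_force_lemma
    (n : ℕ)
    (V : EuclideanSpace ℝ (Fin n) → ℝ)
    (hV_cont : ContinuousOn V {ξ | ξ ≠ 0})
    (hV_nonpos : ∀ ξ : EuclideanSpace ℝ (Fin n), ξ ≠ 0 → V ξ ≤ 0)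
    -- strong force condition
    (r₀ : ℝ) (hr₀ : 0 < r₀)
    (U : EuclideanSpace ℝ (Fin n) → ℝ)
    (hU_C1 : ContDiffOn ℝ 1 U {ξ | 0 < ‖ξ‖ ∧ ‖ξ‖ < r₀})
    (hU_atBot : Filter.Tendsto U (nhdsWithin 0 {ξ | ξ ≠ 0}) Filter.atBot)
    (hU_dom : ∀ ξ : EuclideanSpace ℝ (Fin n), 0 < ‖ξ‖ → ‖ξ‖ < r₀ →
      -V ξ ≥ ‖gradient U ξ‖ ^ 2)
    -- the curves
    (x' : ℕ → ℝ → EuclideanSpace ℝ (Fin n))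
    (hx'_C1 : ∀ k, ContDiff ℝ 1 (x' k))
    (hx'_per : ∀ k, ∀ t : ℝ, x' k (t + 1) = x' k t)
    (hx'_ne : ∀ k, ∀ t : ℝ, x' k t ≠ 0)
    (x : ℝ → EuclideanSpace ℝ (Fin n))
    (hx_cont : Continuous x)
    (hx_per : ∀ t : ℝ, x (t + 1) = x t)
    (hconv : TendstoUniformlyOn x' x Filter.atTop (Set.Icc 0 1))
    (M : ℝ)
    (hM : ∀ k, (∫ t in (0:ℝ)..1, ‖deriv (x' k) t‖ ^ 2) ≤ M)
    (t₀ : ℝ) (ht₀ : x t₀ = 0)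
    (t₁ : ℝ) (ht₁ : x t₁ ≠ 0) :
    Filter.Tendsto (fun k => ∫ t in (0:ℝ)..1, V (x' k t)) Filter.atTop Filter.atBot := by
  have hstrong : IsStrongForce V := isStrongForce_of_gradient hr₀
    (hU_C1.differentiableOn one_ne_zero) hU_atBot hU_dom
  exact gordon_strong_force_lemma_general hV_cont hV_nonpos hstrong one_pos hx'_C1 hx'_per hx'_ne
    hx_per hconv hM ht₀ ht₁
end

section
/- Let N ≥ 2, m_1,…,m_N > 0, h ∈ ℝ, and let V(u_1,…,u_N) = (1/2) Σ_{1≤i≠j≤N} V_{ij}(u_i − u_j) with each V_{ij} : ℝ^n \ {0} → ℝ continuously differentiable. Let ũ = (ũ_1,…,ũ_N) : ℝ → (ℝ^n)^N be twice continuously differentiable and 1-periodic with ũ_i(t) ≠ ũ_j(t) for all t and all i ≠ j. Suppose ũ is a critical point of the functional f(u) = (1/2)(∫₀¹ Σ_{i=1}^N m_i |u̇_i(t)|² dt)·(∫₀¹ (h − V(u(t))) dt) in the sense that for every continuously differentiable 1-periodic v : ℝ → (ℝ^n)^N, the function s ↦ f(ũ + s v) has derivative 0 at s = 0, and suppose f(ũ)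 > 0. Define T > 0 by 1/T² = (∫₀¹ (h − V(ũ(t))) dt) / ((1/2)∫₀¹ Σ_{i=1}^N m_i |ũ̇_i(t)|² dt). Then q(t) := ũ(t/T) is a non-constant T-periodic non-collision solution of (Ph): for all t and all i, m_i q̈_i(t) + ∇_{u_i}V(q(t)) = 0 and (1/2) Σ_{i=1}^N m_i |q̇_i(t)|² + V(q(t)) = h. -/
open Finset

/-!
Running `u` at speed `T⁻¹` amounts to replacing the masses `m` by `T⁻² m`. The functional is
homogeneous in the masses, so `u` remains critical, and the choice of `T` becomes the virial
normalisation `½ ∫₀¹ ∑ᵢ mᵢ |u̇ᵢ|² = ∫₀¹ (h - V(u))`. The first variation of the product of the two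
equal factors is then a multiple of that of `∫₀¹ (½ ∑ᵢ mᵢ |u̇ᵢ|² - V(u))`. Varying one body at a
time, the periodic du Bois-Reymond lemma turns its vanishing into the equations of motion. Energy
is therefore constant, and by the normalisation its mean over a period is `h`.
-/

open MeasureTheory Set Function Metric
open scoped RealInnerProductSpace Interval

section PeriodicCurves

variable {E : Type*} [NormedAddCommGroup E] [NormedSpace ℝ E] {c : ℝ}

lemma periodic_deriv_s4 {f : ℝ → E} (hf : Periodic f c) : Periodic (deriv f) c := fun t => by
  rw [← deriv_comp_add_const, hf.funext]

lemma periodic_primitive {f : ℝ → E} (hf : Continuous f) (hper : Periodic f c)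
    (hmean : ∫ t in 0..c, f t = 0) :
    Periodic (fun t => ∫ s in 0..t, f s) c := fun t => by
  have hshift := hper.intervalIntegral_add_eq_add 0 t fun _ _ => hf.intervalIntegrable _ _
  rwa [zero_add, hmean, add_zero] at hshift

lemma contDiff_one_primitive [CompleteSpace E] {f : ℝ → E} (hf : Continuous f) :
    ContDiff ℝ 1 (fun t => ∫ s in 0..t, f s) := by
  have hderiv (t : ℝ) := (hf.integral_hasStrictDerivAt 0 t).hasDerivAt
  refine contDiff_one_iff_deriv.2 ⟨fun t => (hderiv t).differentiableAt, ?_⟩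
  rwa [funext fun t => (hderiv t).deriv]

end PeriodicCurves

lemma eq_zero_of_periodic_of_nonneg_of_integral_eq_zero {g : ℝ → ℝ} {c : ℝ} (hc : 0 < c)
    (hg : Continuous g) (hper : Periodic g c) (hnonneg : ∀ t, 0 ≤ g t)
    (hint : ∫ t in 0..c, g t = 0) (t : ℝ) : g t = 0 := by
  by_contra hne
  have hpos : 0 < ∫ s in t..t + c, g s :=
    intervalIntegral.integral_pos (by linarith) hg.continuousOn (fun s _ => hnonneg s)
      ⟨t, ⟨le_rfl, by linarith⟩, (hnonneg t).lt_of_ne' hne⟩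
  rw [hper.intervalIntegral_add_eq t 0, zero_add, hint] at hpos
  exact hpos.false

section DuBoisReymond

variable {E : Type*} [NormedAddCommGroup E] [InnerProductSpace ℝ E] {a b : ℝ → E} {c : ℝ}

lemma integral_inner_deriv_eq_neg_of_periodic {f v : ℝ → E} (hf : ContDiff ℝ 1 f)
    (hv : ContDiff ℝ 1 v) (hf_per : Periodic f c) (hv_per : Periodic v c) :
    ∫ t in 0..c, ⟪f t, deriv v t⟫ = -∫ t in 0..c, ⟪deriv f t, v t⟫ := by
  have hderiv (t : ℝ) : HasDerivAt (fun t => ⟪f t, v t⟫) (⟪f t, deriv v t⟫ + ⟪deriv f t, v t⟫) t :=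
    ((hf.differentiable one_ne_zero t).hasDerivAt).inner ℝ
      (hv.differentiable one_ne_zero t).hasDerivAt
  have hfv : IntervalIntegrable (fun t => ⟪f t, deriv v t⟫) volume 0 c :=
    (hf.continuous.inner hv.continuous_deriv_one).intervalIntegrable 0 c
  have hfv' : IntervalIntegrable (fun t => ⟪deriv f t, v t⟫) volume 0 c :=
    (hf.continuous_deriv_one.inner hv.continuous).intervalIntegrable 0 c
  rw [eq_neg_iff_add_eq_zero, ← intervalIntegral.integral_add hfv hfv',
    intervalIntegral.integral_eq_sub_of_hasDerivAt (fun t _ => hderiv t) (hfv.add hfv'),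
    hf_per.eq, hv_per.eq, sub_self]

variable [CompleteSpace E]

lemma intervalIntegral_const_inner (x : E) {f : ℝ → E} {t₀ t₁ : ℝ}
    (hf : IntervalIntegrable f volume t₀ t₁) :
    ∫ t in t₀..t₁, ⟪x, f t⟫ = ⟪x, ∫ t in t₀..t₁, f t⟫ :=
  (innerSL ℝ x).intervalIntegral_comp_comm hf

lemma exists_eq_const_of_integral_inner_deriv_eq_zero (hc : 0 < c) (ha : Continuous a)
    (hper : Periodic a c)
    (hweak : ∀ v : ℝ → E, ContDiff ℝ 1 v → Periodic v c → ∫ t in 0..c, ⟪a t, deriv v t⟫ = 0) :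
    ∃ x, ∀ t, a t = x := by
  set mean : E := c⁻¹ • ∫ t in 0..c, a t with hmean
  set w : ℝ → E := fun t => a t - mean with hw
  have hw_cont : Continuous w := ha.sub continuous_const
  have hw_per : Periodic w c := fun t => by simp only [hw, hper t]
  have hw_mean : ∫ t in 0..c, w t = 0 := by
    rw [intervalIntegral.integral_sub (ha.intervalIntegrable 0 c) intervalIntegrable_const,
      intervalIntegral.integral_const, sub_zero, hmean, smul_inv_smul₀ hc.ne', sub_self]
  -- The variation is the primitive of `w`, which is periodic because `w` has zero mean.
  have hw_orth : ∫ t in 0..c, ⟪a t, w t⟫ = 0 := by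
    simpa only [hw_cont.deriv_integral] using
      hweak _ (contDiff_one_primitive hw_cont) (periodic_primitive hw_cont hw_per hw_mean)
  have hw_sq : ∫ t in 0..c, ⟪w t, w t⟫ = 0 := by
    have hsplit (t : ℝ) : ⟪w t, w t⟫ = ⟪a t, w t⟫ - ⟪mean, w t⟫ := inner_sub_left _ _ _
    simp only [hsplit]
    rw [intervalIntegral.integral_sub ((ha.inner hw_cont).intervalIntegrable 0 c)
      ((continuous_const.inner hw_cont).intervalIntegrable 0 c), hw_orth,
      intervalIntegral_const_inner mean (hw_cont.intervalIntegrable 0 c), hw_mean, inner_zero_right,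
      sub_zero]
  refine ⟨mean, fun t => sub_eq_zero.1 (inner_self_eq_zero (𝕜 := ℝ).1 ?_)⟩
  exact eq_zero_of_periodic_of_nonneg_of_integral_eq_zero hc (hw_cont.inner hw_cont)
    (fun t => by simp only [hw_per t]) (fun _ => real_inner_self_nonneg) hw_sq t

theorem hasDerivAt_neg_of_integral_inner_deriv_eq (hc : 0 < c) (ha : Continuous a)
    (hb : Continuous b) (ha_per : Periodic a c) (hb_per : Periodic b c)
    (hweak : ∀ v : ℝ → E, ContDiff ℝ 1 v → Periodic v c →
      ∫ t in 0..c, ⟪a t, deriv v t⟫ = ∫ t in 0..c, ⟪b t, v t⟫) (t : ℝ) :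
    HasDerivAt a (-b t) t := by
  -- Constant variations show that `b` has zero mean, so that its primitive is periodic.
  have hb_mean : ∫ t in 0..c, b t = 0 := by
    have htest := hweak (fun _ => ∫ t in 0..c, b t) contDiff_const fun _ => rfl
    simp only [deriv_const, inner_zero_right, intervalIntegral.integral_zero,
      real_inner_comm (∫ t in 0..c, b t)] at htest
    rw [intervalIntegral_const_inner _ (hb.intervalIntegrable 0 c)] at htest
    exact inner_self_eq_zero.1 htest.symm
  set B : ℝ → E := fun t => ∫ s in 0..t, b s
  have hB : ContDiff ℝ 1 B := contDiff_one_primitive hb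
  have hB_per : Periodic B c := periodic_primitive hb hb_per hb_mean
  have hB_deriv (t : ℝ) : HasDerivAt B (b t) t := (hb.integral_hasStrictDerivAt 0 t).hasDerivAt
  obtain ⟨x, hx⟩ : ∃ x, ∀ t, a t + B t = x := by
    refine exists_eq_const_of_integral_inner_deriv_eq_zero hc (ha.add hB.continuous)
      (ha_per.add hB_per) fun v hv hv_per => ?_
    simp only [inner_add_left]
    rw [intervalIntegral.integral_add
      ((ha.inner hv.continuous_deriv_one).intervalIntegrable 0 c)
      ((hB.continuous.inner hv.continuous_deriv_one).intervalIntegrable 0 c), hweak v hv hv_per,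
      integral_inner_deriv_eq_neg_of_periodic hB hv hB_per hv_per]
    simp only [(hB_deriv _).deriv, add_neg_cancel]
  rw [show a = fun t => x - B t from funext fun t => eq_sub_of_add_eq (hx t)]
  exact (hB_deriv t).const_sub x

end DuBoisReymond

section FirstVariation

variable {F G : Type*} [NormedAddCommGroup F] [NormedSpace ℝ F]
  [NormedAddCommGroup G] [NormedSpace ℝ G]

lemma hasDerivAt_add_smul (x v : F) (s : ℝ) : HasDerivAt (fun s : ℝ => x + s • v) v s := by
  simpa using ((hasDerivAt_id s).smul_const v).const_add x

lemma hasDerivAt_comp_add_smul {Φ : F → G} {x v : F} {s : ℝ}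
    (hΦ : DifferentiableAt ℝ Φ (x + s • v)) :
    HasDerivAt (fun s : ℝ => Φ (x + s • v)) (fderiv ℝ Φ (x + s • v) v) s :=
  hΦ.hasFDerivAt.comp_hasDerivAt s (hasDerivAt_add_smul x v s)

lemma exists_closedBall_forall_add_smul_mem {Ω : Set F} (hΩ : IsOpen Ω) {K : Set ℝ}
    (hK : IsCompact K) {x v : ℝ → F} (hx : Continuous x) (hv : Continuous v)
    (hxΩ : ∀ t ∈ K, x t ∈ Ω) :
    ∃ ε > 0, ∀ s ∈ closedBall (0 : ℝ) ε, ∀ t ∈ K, x t + s • v t ∈ Ω := by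
  have hopen : IsOpen {p : ℝ × ℝ | x p.2 + p.1 • v p.2 ∈ Ω} := hΩ.preimage (by fun_prop)
  have hnear : ∀ᶠ s in nhds (0 : ℝ), ∀ t ∈ K, x t + s • v t ∈ Ω :=
    hK.eventually_forall_of_forall_eventually fun t ht =>
      hopen.mem_nhds (by simpa using hxΩ t ht)
  obtain ⟨ε, hε, hball⟩ := nhds_basis_closedBall.eventually_iff.1 hnear
  exact ⟨ε, hε, fun s hs => hball hs⟩

theorem hasDerivAt_integral_add_smul {Φ : F → G} {Ω : Set F} (hΩ : IsOpen Ω)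
    (hΦ : ContDiffOn ℝ 1 Φ Ω) {x v : ℝ → F} (hx : Continuous x) (hv : Continuous v) {a b : ℝ}
    (hxΩ : ∀ t ∈ [[a, b]], x t ∈ Ω) :
    HasDerivAt (fun s : ℝ => ∫ t in a..b, Φ (x t + s • v t))
      (∫ t in a..b, fderiv ℝ Φ (x t) (v t)) 0 := by
  obtain ⟨ε, hε, hmem⟩ := exists_closedBall_forall_add_smul_mem hΩ isCompact_uIcc hx hv hxΩ
  have hzero : (0 : ℝ) ∈ closedBall (0 : ℝ) ε := mem_closedBall_self hε.le
  have hsub : Ι a b ⊆ [[a, b]] := uIoc_subset_uIcc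
  have hcont (s) (hs : s ∈ closedBall (0 : ℝ) ε) :
      ContinuousOn (fun t => Φ (x t + s • v t)) [[a, b]] :=
    hΦ.continuousOn.comp (by fun_prop) (hmem s hs)
  have hderiv_cont : ContinuousOn (fun p : ℝ × ℝ => fderiv ℝ Φ (x p.2 + p.1 • v p.2) (v p.2))
      (closedBall 0 ε ×ˢ [[a, b]]) :=
    ((hΦ.continuousOn_fderiv_of_isOpen hΩ le_rfl).comp (by fun_prop)
      fun p hp => hmem p.1 hp.1 p.2 hp.2).clm_apply (by fun_prop)
  obtain ⟨C, hC⟩ := ((isCompact_closedBall 0 ε).prod isCompact_uIcc).exists_bound_of_continuousOn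
    hderiv_cont
  have hderiv (t) (ht : t ∈ [[a, b]]) (s) (hs : s ∈ closedBall (0 : ℝ) ε) :
      HasDerivAt (fun s => Φ (x t + s • v t)) (fderiv ℝ Φ (x t + s • v t) (v t)) s :=
    hasDerivAt_comp_add_smul <|
      (hΦ.differentiableOn one_ne_zero).differentiableAt (hΩ.mem_nhds (hmem s hs t ht))
  have key := (intervalIntegral.hasDerivAt_integral_of_dominated_loc_of_deriv_le (μ := volume)
    (F := fun (s : ℝ) t => Φ (x t + s • v t)) (bound := fun _ => C) (closedBall_mem_nhds 0 hε)
    (Filter.eventually_of_mem (closedBall_mem_nhds 0 hε) fun s hs =>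
      ((hcont s hs).mono hsub).aestronglyMeasurable measurableSet_uIoc)
    (hcont 0 hzero).intervalIntegrable
    (((hderiv_cont.comp (f := fun t => ((0 : ℝ), t)) (by fun_prop)
      fun t ht => ⟨hzero, ht⟩).mono hsub).aestronglyMeasurable measurableSet_uIoc)
    (ae_of_all _ fun t ht s hs => hC (s, t) ⟨hs, hsub ht⟩) intervalIntegrable_const
    (ae_of_all _ fun t ht s hs => hderiv t (hsub ht) s hs)).2
  simpa only [zero_smul, add_zero] using key

end FirstVariation

section NBody

variable {ι E : Type*}

section Kinematics

variable [NormedAddCommGroup E] [NormedSpace ℝ E]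

/-- The velocities `u̇ᵢ` of the bodies moving along `u`. The derivative is taken body by body,
so a component is meaningful even where another one is not differentiable. -/
noncomputable def velocity (u : ℝ → ι → E) (t : ℝ) : ι → E := fun i => deriv (fun s => u s i) t

lemma velocity_comp_mul_left (u : ℝ → ι → E) (c : ℝ) :
    velocity (fun t => u (c * t)) = fun t => c • velocity u (c * t) := by
  ext t i
  exact deriv_comp_mul_left c (fun s => u s i) t

lemma velocity_const_smul (u : ℝ → ι → E) (c : ℝ) :
    velocity (fun t => c • u t) = fun t => c • velocity u t := by
  ext t i
  exact deriv_fun_const_smul_field c (fun s => u s i)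

lemma velocity_single [DecidableEq ι] (i : ι) (w : ℝ → E) (t : ℝ) :
    velocity (fun t => Pi.single i (w t)) t = (Pi.single i (deriv w t) : ι → E) := by
  ext j
  rcases eq_or_ne j i with rfl | hji
  · simp [velocity]
  · simp [velocity, hji]

lemma velocity_eq_of_hasDerivAt {u : ℝ → ι → E} {u' : ι → E} {t : ℝ} (hu : HasDerivAt u u' t) :
    velocity u t = u' :=
  funext fun i => (hasDerivAt_pi.1 hu i).deriv

lemma hasDerivAt_velocity {u : ℝ → ι → E} (hu : Differentiable ℝ u) (t : ℝ) :
    HasDerivAt u (velocity u t) t :=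
  hasDerivAt_pi.2 fun i => (differentiable_pi.1 hu i t).hasDerivAt

lemma velocity_add_smul {u v : ℝ → ι → E} (hu : Differentiable ℝ u) (hv : Differentiable ℝ v)
    (s : ℝ) : velocity (fun t => u t + s • v t) = fun t => velocity u t + s • velocity v t :=
  funext fun t => velocity_eq_of_hasDerivAt <| hasDerivAt_pi.2 fun i =>
    (hasDerivAt_pi.1 (hasDerivAt_velocity hu t) i).add
      ((hasDerivAt_pi.1 (hasDerivAt_velocity hv t) i).const_smul s)

lemma velocity_eq_deriv [Finite ι] {u : ℝ → ι → E} (hu : Differentiable ℝ u) :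
    velocity u = deriv u := by
  have := Fintype.ofFinite ι
  exact funext fun t => (hasDerivAt_velocity hu t).deriv.symm

variable [Fintype ι]

lemma continuous_velocity {u : ℝ → ι → E} (hu : ContDiff ℝ 1 u) : Continuous (velocity u) :=
  velocity_eq_deriv (hu.differentiable one_ne_zero) ▸ hu.continuous_deriv_one

lemma contDiff_two_of_hasDerivAt_velocity {u a : ℝ → ι → E} (hu : Differentiable ℝ u)
    (ha : ∀ t, HasDerivAt (velocity u) (a t) t) (ha_cont : Continuous a) : ContDiff ℝ 2 u := by
  refine contDiff_succ_iff_deriv (n := 1).2 ⟨hu, by simp, ?_⟩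
  rw [← velocity_eq_deriv hu]
  refine contDiff_one_iff_deriv.2 ⟨fun t => (ha t).differentiableAt, ?_⟩
  rwa [funext fun t => (ha t).deriv]

end Kinematics

section VisViva

variable [Fintype ι] [NormedAddCommGroup E]

/-- The *vis viva* `∑ i, m i * ‖p i‖ ^ 2` of bodies with masses `m` and velocities `p`, that is,
twice the kinetic energy. -/
def visViva (m : ι → ℝ) (p : ι → E) : ℝ := ∑ i, m i * ‖p i‖ ^ 2

lemma visViva_smul_mass (c : ℝ) (m : ι → ℝ) (p : ι → E) :
    visViva (c • m) p = c * visViva m p := by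
  simp only [visViva, Pi.smul_apply, smul_eq_mul, mul_sum, mul_assoc]

lemma visViva_smul [NormedSpace ℝ E] (c : ℝ) (m : ι → ℝ) (p : ι → E) :
    visViva m (c • p) = c ^ 2 * visViva m p := by
  simp only [visViva, Pi.smul_apply, norm_smul, mul_pow, Real.norm_eq_abs, sq_abs, mul_sum]
  exact sum_congr rfl fun i _ => by ring

end VisViva

section Potential

variable [NormedAddCommGroup E]

/-- The set of configurations in which no two bodies occupy the same position. -/
def noncollisionSet (ι E : Type*) : Set (ι → E) := {X | ∀ i j, i ≠ j → X i ≠ X j}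

lemma isOpen_noncollisionSet [Finite ι] : IsOpen (noncollisionSet ι E) := by
  simp only [noncollisionSet, ofPred_forall]
  exact isOpen_iInter_of_finite fun i => isOpen_iInter_of_finite fun j =>
    isOpen_iInter_of_finite fun _ => isOpen_ne_fun (continuous_apply i) (continuous_apply j)

variable [Fintype ι] [DecidableEq ι]

/-- The potential `V` of a system of bodies interacting pairwise through the `V i j`. -/
noncomputable def pairPotential (V : ι → ι → E → ℝ) (X : ι → E) : ℝ :=
  (1 / 2) * ∑ i, ∑ j ∈ univ.filter (fun j => j ≠ i), V i j (X i - X j)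

lemma contDiffOn_pairPotential [NormedSpace ℝ E] {V : ι → ι → E → ℝ} {k : WithTop ℕ∞}
    (hV : ∀ i j, i ≠ j → ContDiffOn ℝ k (V i j) {ξ | ξ ≠ 0}) :
    ContDiffOn ℝ k (pairPotential V) (noncollisionSet ι E) := by
  refine contDiffOn_const.mul (ContDiffOn.sum fun i _ => ContDiffOn.sum fun j hj => ?_)
  have hij : i ≠ j := (mem_filter.1 hj).2.symm
  exact (hV i j hij).comp (by fun_prop) fun X hX => sub_ne_zero.2 (hX i j hij)

end Potential

variable [NormedAddCommGroup E] [InnerProductSpace ℝ E]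

section KineticForm

variable [Fintype ι]

/-- The mass-weighted inner product, the polar form of `visViva`. -/
def massInner (m : ι → ℝ) (p w : ι → E) : ℝ := ∑ i, m i * ⟪p i, w i⟫

lemma massInner_single [DecidableEq ι] (m : ι → ℝ) (p : ι → E) (i : ι) (w : E) :
    massInner m p (Pi.single i w) = ⟪m i • p i, w⟫ := by
  rw [massInner, sum_eq_single_of_mem i (mem_univ i) fun j _ hji => by simp [hji],
    Pi.single_eq_same, real_inner_smul_left]

lemma contDiff_visViva (m : ι → ℝ) {k : WithTop ℕ∞} :
    ContDiff ℝ k (visViva m : (ι → E) → ℝ) :=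
  ContDiff.sum fun i _ => contDiff_const.mul ((contDiff_apply ℝ E i).norm_sq ℝ)

lemma hasDerivAt_visViva (m : ι → ℝ) {p : ℝ → ι → E} {a : ι → E} {t : ℝ} (hp : HasDerivAt p a t) :
    HasDerivAt (fun t => visViva m (p t)) (2 * massInner m (p t) a) t := by
  refine (HasDerivAt.fun_sum fun i _ =>
    ((hasDerivAt_pi.1 hp i).norm_sq.const_mul (m i))).congr_deriv ?_
  rw [massInner, mul_sum]
  exact sum_congr rfl fun i _ => mul_left_comm _ _ _

lemma fderiv_visViva_apply (m : ι → ℝ) (p w : ι → E) :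
    fderiv ℝ (visViva m) p w = 2 * massInner m p w := by
  have hfderiv := hasDerivAt_comp_add_smul (s := 0)
    ((contDiff_visViva (k := 1) m).differentiable one_ne_zero (p + (0 : ℝ) • w))
  simpa using hfderiv.unique (hasDerivAt_visViva m (hasDerivAt_add_smul p w 0))

end KineticForm

section PartialGradient

variable [CompleteSpace E] [DecidableEq ι] {U : (ι → E) → ℝ} {X : ι → E}

/-- The gradient `∇_{uᵢ} U` of `U` in the position of the body `i`, at the configuration `X`. -/
noncomputable def partialGradient (U : (ι → E) → ℝ) (i : ι) (X : ι → E) : E :=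
  gradient (fun y => U (Function.update X i y)) (X i)

lemma partialGradient_eq [Finite ι] (hU : DifferentiableAt ℝ U X) (i : ι) :
    partialGradient U i X =
      (InnerProductSpace.toDual ℝ E).symm (fderiv ℝ U X ∘L .single ℝ (fun _ : ι => E) i) := by
  have := Fintype.ofFinite ι
  have hsingle : ContinuousLinearMap.pi (Pi.single i (.id ℝ E)) =
      ContinuousLinearMap.single ℝ (fun _ : ι => E) i := by
    ext w j
    rcases eq_or_ne j i with rfl | hji <;> simp [*]
  have hU' : HasFDerivAt U (fderiv ℝ U X) (Function.update X i (X i)) := by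
    rw [update_eq_self]
    exact hU.hasFDerivAt
  have hpartial := hU'.comp (X i) (hasFDerivAt_update X (X i))
  rw [hsingle] at hpartial
  exact hpartial.hasGradientAt.gradient

lemma inner_partialGradient [Finite ι] (hU : DifferentiableAt ℝ U X) (i : ι) (w : E) :
    ⟪partialGradient U i X, w⟫ = fderiv ℝ U X (Pi.single i w) := by
  simp [partialGradient_eq hU]

variable [Fintype ι]

lemma fderiv_eq_sum_inner_partialGradient (hU : DifferentiableAt ℝ U X) (w : ι → E) :
    fderiv ℝ U X w = ∑ i, ⟪partialGradient U i X, w i⟫ := by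
  simp only [inner_partialGradient hU, ← map_sum, univ_sum_single]

lemma continuousOn_partialGradient {Ω : Set (ι → E)} (hΩ : IsOpen Ω)
    (hU : ContDiffOn ℝ 1 U Ω) (i : ι) : ContinuousOn (partialGradient U i) Ω := by
  have hfderiv := hU.continuousOn_fderiv_of_isOpen hΩ le_rfl
  refine ContinuousOn.congr ?_ fun X hX =>
    partialGradient_eq ((hU.differentiableOn one_ne_zero).differentiableAt (hΩ.mem_nhds hX)) i
  exact (LinearIsometryEquiv.continuous _).comp_continuousOn
    (hfderiv.clm_comp continuousOn_const)

end PartialGradient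

section CriticalLoops

variable [Fintype ι]

/-- The functional `u ↦ ½ (∫₀¹ ∑ᵢ mᵢ |u̇ᵢ|²) (∫₀¹ (h - U(u)))` on `1`-periodic curves, whose
critical points of positive value are, up to a change of the period, motions of energy `h`. -/
noncomputable def fixedEnergyFunctional (m : ι → ℝ) (h : ℝ) (U : (ι → E) → ℝ)
    (u : ℝ → ι → E) : ℝ :=
  (1 / 2) * (∫ t in (0 : ℝ)..1, visViva m (velocity u t)) * (∫ t in (0 : ℝ)..1, (h - U (u t)))

/-- `u` is a critical point of `f` with respect to `1`-periodic `C¹` variations. -/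
def IsCriticalLoop (f : (ℝ → ι → E) → ℝ) (u : ℝ → ι → E) : Prop :=
  ∀ v : ℝ → ι → E, ContDiff ℝ 1 v → Periodic v 1 →
    HasDerivAt (fun s : ℝ => f (fun t => u t + s • v t)) 0 0

/-- `q` is a solution of class `C²` of the fixed-energy problem (Ph) with masses `m`, potential `U`
and energy `h`. -/
structure IsFixedEnergySolution [CompleteSpace E] [DecidableEq ι] (m : ι → ℝ) (h : ℝ)
    (U : (ι → E) → ℝ) (q : ℝ → ι → E) : Prop where
  contDiff : ContDiff ℝ 2 q
  newton (t : ℝ) (i : ι) : m i • velocity (velocity q) t i + partialGradient U i (q t) = 0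
  energy (t : ℝ) : (1 / 2) * visViva m (velocity q t) + U (q t) = h

variable {m : ι → ℝ} {h : ℝ} {U : (ι → E) → ℝ} {u : ℝ → ι → E}

lemma fixedEnergyFunctional_smul_mass (c : ℝ) :
    fixedEnergyFunctional (c • m) h U u = c * fixedEnergyFunctional m h U u := by
  simp only [fixedEnergyFunctional, visViva_smul_mass, intervalIntegral.integral_const_mul]
  ring

lemma IsCriticalLoop.smul_mass (hcrit : IsCriticalLoop (fixedEnergyFunctional m h U) u) (c : ℝ) :
    IsCriticalLoop (fixedEnergyFunctional (c • m) h U) u := fun v hv hv_per => by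
  simpa only [fixedEnergyFunctional_smul_mass, mul_zero] using (hcrit v hv hv_per).const_mul c

lemma IsFixedEnergySolution.comp_mul_left [CompleteSpace E] [DecidableEq ι] {c : ℝ}
    (hu : IsFixedEnergySolution (c ^ 2 • m) h U u) :
    IsFixedEnergySolution m h U (fun t => u (c * t)) where
  contDiff := hu.contDiff.comp (contDiff_const.mul contDiff_id)
  newton t i := by
    have hacc : velocity (velocity fun t => u (c * t)) t i =
        c ^ 2 • velocity (velocity u) (c * t) i := by
      rw [velocity_comp_mul_left, velocity_const_smul fun t => velocity u (c * t),
        velocity_comp_mul_left (velocity u)]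
      simp only [Pi.smul_apply, smul_smul, sq]
    rw [hacc, smul_smul, mul_comm]
    exact hu.newton (c * t) i
  energy t := by
    rw [velocity_comp_mul_left, visViva_smul, ← visViva_smul_mass]
    exact hu.energy (c * t)

lemma hasDerivAt_integral_visViva_velocity (hu : ContDiff ℝ 1 u) {v : ℝ → ι → E}
    (hv : ContDiff ℝ 1 v) :
    HasDerivAt
      (fun s : ℝ => ∫ t in (0 : ℝ)..1, visViva m (velocity (fun t => u t + s • v t) t))
      (2 * ∫ t in (0 : ℝ)..1, massInner m (velocity u t) (velocity v t)) 0 := by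
  simp only [velocity_add_smul (hu.differentiable one_ne_zero) (hv.differentiable one_ne_zero)]
  simpa only [fderiv_visViva_apply, intervalIntegral.integral_const_mul] using
    hasDerivAt_integral_add_smul isOpen_univ (contDiff_visViva m).contDiffOn
      (continuous_velocity hu) (continuous_velocity hv) fun _ _ => mem_univ _

lemma energy_eq_of_virial (hUu : Continuous fun t => U (u t)) {e : ℝ}
    (he : ∀ t, (1 / 2) * visViva m (velocity u t) + U (u t) = e)
    (hvirial : (1 / 2) * ∫ t in (0 : ℝ)..1, visViva m (velocity u t) =
      ∫ t in (0 : ℝ)..1, (h - U (u t))) : e = h := by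
  have hkin (t : ℝ) : (1 / 2) * visViva m (velocity u t) = (e - h) + (h - U (u t)) := by
    linarith [he t]
  rw [← intervalIntegral.integral_const_mul, intervalIntegral.integral_congr fun t _ => hkin t,
    intervalIntegral.integral_add intervalIntegrable_const
      ((continuous_const.fun_sub hUu).intervalIntegrable 0 1), intervalIntegral.integral_const,
    sub_zero, one_smul] at hvirial
  linarith

variable {Ω : Set (ι → E)}

lemma IsCriticalLoop.weak_eulerLagrange
    (hcrit : IsCriticalLoop (fixedEnergyFunctional m h U) u) (hΩ : IsOpen Ω)
    (hU : ContDiffOn ℝ 1 U Ω) (hu : ContDiff ℝ 1 u) (huΩ : ∀ t, u t ∈ Ω)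
    (hne : ∫ t in (0 : ℝ)..1, (h - U (u t)) ≠ 0)
    (hvirial : (1 / 2) * ∫ t in (0 : ℝ)..1, visViva m (velocity u t) =
      ∫ t in (0 : ℝ)..1, (h - U (u t)))
    {v : ℝ → ι → E} (hv : ContDiff ℝ 1 v) (hv_per : Periodic v 1) :
    ∫ t in (0 : ℝ)..1, massInner m (velocity u t) (velocity v t) =
      ∫ t in (0 : ℝ)..1, fderiv ℝ U (u t) (v t) := by
  have hkin := hasDerivAt_integral_visViva_velocity (m := m) hu hv
  have hpot := hasDerivAt_integral_add_smul hΩ (contDiffOn_const.sub hU) (x := u) (v := v)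
    (Φ := fun X => h - U X) hu.continuous hv.continuous (a := 0) (b := 1) fun t _ => huΩ t
  have hderiv := (hcrit v hv hv_per).unique ((hkin.const_mul (1 / 2)).mul hpot)
  simp only [zero_smul, add_zero, fderiv_const_sub, _root_.neg_apply,
    intervalIntegral.integral_neg, hvirial] at hderiv
  refine mul_left_cancel₀ hne ?_
  linarith

variable [CompleteSpace E] [DecidableEq ι]

theorem IsCriticalLoop.hasDerivAt_momentum
    (hcrit : IsCriticalLoop (fixedEnergyFunctional m h U) u) (hΩ : IsOpen Ω)
    (hU : ContDiffOn ℝ 1 U Ω) (hu : ContDiff ℝ 1 u) (hper : Periodic u 1) (huΩ : ∀ t, u t ∈ Ω)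
    (hne : ∫ t in (0 : ℝ)..1, (h - U (u t)) ≠ 0)
    (hvirial : (1 / 2) * ∫ t in (0 : ℝ)..1, visViva m (velocity u t) =
      ∫ t in (0 : ℝ)..1, (h - U (u t)))
    (i : ι) (t : ℝ) :
    HasDerivAt (fun t => m i • velocity u t i) (-partialGradient U i (u t)) t := by
  have hvel : Periodic (velocity u) 1 :=
    velocity_eq_deriv (hu.differentiable one_ne_zero) ▸ periodic_deriv_s4 hper
  refine hasDerivAt_neg_of_integral_inner_deriv_eq
    (a := fun t => m i • velocity u t i) (b := fun t => partialGradient U i (u t)) one_pos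
    ((continuous_pi_iff.1 (continuous_velocity hu) i).const_smul _)
    ((continuousOn_partialGradient hΩ hU i).comp_continuous hu.continuous huΩ)
    (fun t => congrArg (fun p => m i • p i) (hvel t))
    (fun t => congrArg (partialGradient U i) (hper t)) (fun w hw hw_per => ?_) t
  have hdiff (t : ℝ) : DifferentiableAt ℝ U (u t) :=
    (hU.differentiableOn one_ne_zero).differentiableAt (hΩ.mem_nhds (huΩ t))
  simpa only [velocity_single, massInner_single, ← inner_partialGradient (hdiff _)] using
    hcrit.weak_eulerLagrange hΩ hU hu huΩ hne hvirial (v := fun t => Pi.single i (w t))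
      ((ContinuousLinearMap.single ℝ (fun _ : ι => E) i).contDiff.comp hw)
      fun t => congrArg (Pi.single i) (hw_per t)

lemma energy_eq_of_newton {a : ℝ → ι → E} (hu : Differentiable ℝ u)
    (hU : ∀ t, DifferentiableAt ℝ U (u t)) (ha : ∀ t, HasDerivAt (velocity u) (a t) t)
    (hnewton : ∀ t i, m i • a t i = -partialGradient U i (u t)) (s t : ℝ) :
    (1 / 2) * visViva m (velocity u s) + U (u s) =
      (1 / 2) * visViva m (velocity u t) + U (u t) := by
  have hderiv (t : ℝ) :
      HasDerivAt (fun t => (1 / 2) * visViva m (velocity u t) + U (u t)) 0 t := by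
    refine (((hasDerivAt_visViva m (ha t)).const_mul (1 / 2)).add
      ((hU t).hasFDerivAt.comp_hasDerivAt t (hasDerivAt_velocity hu t))).congr_deriv ?_
    have hpower : massInner m (velocity u t) (a t) = -fderiv ℝ U (u t) (velocity u t) := by
      rw [fderiv_eq_sum_inner_partialGradient (hU t), massInner, ← sum_neg_distrib]
      refine sum_congr rfl fun i _ => ?_
      rw [← real_inner_smul_right, hnewton, inner_neg_right, real_inner_comm]
    rw [hpower]
    ring
  exact is_const_of_deriv_eq_zero (fun t => (hderiv t).differentiableAt)
    (fun t => (hderiv t).deriv) s t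

theorem IsCriticalLoop.isFixedEnergySolution
    (hcrit : IsCriticalLoop (fixedEnergyFunctional m h U) u) (hm : ∀ i, m i ≠ 0) (hΩ : IsOpen Ω)
    (hU : ContDiffOn ℝ 1 U Ω) (hu : ContDiff ℝ 1 u) (hper : Periodic u 1) (huΩ : ∀ t, u t ∈ Ω)
    (hne : ∫ t in (0 : ℝ)..1, (h - U (u t)) ≠ 0)
    (hvirial : (1 / 2) * ∫ t in (0 : ℝ)..1, visViva m (velocity u t) =
      ∫ t in (0 : ℝ)..1, (h - U (u t))) :
    IsFixedEnergySolution m h U u := by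
  have hu_diff : Differentiable ℝ u := hu.differentiable one_ne_zero
  have hU_diff (t : ℝ) : DifferentiableAt ℝ U (u t) :=
    (hU.differentiableOn one_ne_zero).differentiableAt (hΩ.mem_nhds (huΩ t))
  set a : ℝ → ι → E := fun t i => (m i)⁻¹ • -partialGradient U i (u t)
  have ha (t : ℝ) : HasDerivAt (velocity u) (a t) t := hasDerivAt_pi.2 fun i => by
    simpa only [inv_smul_smul₀ (hm i)] using
      (hcrit.hasDerivAt_momentum hΩ hU hu hper huΩ hne hvirial i t).fun_const_smul (m i)⁻¹
  have hnewton (t : ℝ) (i : ι) : m i • a t i = -partialGradient U i (u t) :=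
    smul_inv_smul₀ (hm i) _
  have ha_cont : Continuous a := continuous_pi fun i =>
    ((continuousOn_partialGradient hΩ hU i).comp_continuous hu.continuous huΩ).neg.const_smul _
  refine ⟨contDiff_two_of_hasDerivAt_velocity hu_diff ha ha_cont, fun t i => ?_, fun t => ?_⟩
  · rw [velocity_eq_of_hasDerivAt (ha t), hnewton, neg_add_cancel]
  · exact energy_eq_of_virial (hU.continuousOn.comp_continuous hu.continuous huΩ)
      (fun s => energy_eq_of_newton hu_diff hU_diff ha hnewton s t) hvirial

theorem critical_point_gives_solution_general (hm : ∀ i, m i ≠ 0) (hΩ : IsOpen Ω)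
    (hU : ContDiffOn ℝ 1 U Ω) (hu : ContDiff ℝ 1 u) (hper : Periodic u 1) (huΩ : ∀ t, u t ∈ Ω)
    (hcrit : IsCriticalLoop (fixedEnergyFunctional m h U) u) {T : ℝ} (hT : T ≠ 0)
    (hT_def : 1 / T ^ 2 = (∫ t in (0 : ℝ)..1, (h - U (u t))) /
      ((1 / 2) * ∫ t in (0 : ℝ)..1, visViva m (velocity u t))) :
    (∃ t₁ t₂ : ℝ, u (t₁ / T) ≠ u (t₂ / T)) ∧ Periodic (fun t => u (t / T)) T ∧
      IsFixedEnergySolution m h U (fun t => u (t / T)) := by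
  have hquot_ne : (∫ t in (0 : ℝ)..1, (h - U (u t))) /
      ((1 / 2) * ∫ t in (0 : ℝ)..1, visViva m (velocity u t)) ≠ 0 := by
    rw [← hT_def]
    positivity
  obtain ⟨hpot_ne, hkin_ne⟩ := div_ne_zero_iff.1 hquot_ne
  have hvirial : (1 / 2) * ∫ t in (0 : ℝ)..1, visViva (T⁻¹ ^ 2 • m) (velocity u t) =
      ∫ t in (0 : ℝ)..1, (h - U (u t)) := by
    simp only [visViva_smul_mass, intervalIntegral.integral_const_mul]
    rw [mul_left_comm, inv_pow, ← one_div, hT_def, div_mul_cancel₀ _ hkin_ne]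
  refine ⟨?_, fun t => ?_, ?_⟩
  · by_contra! hconst
    have hu_const : u = fun _ => u 0 := funext fun t => by
      simpa [hT] using hconst (t * T) 0
    refine hkin_ne ?_
    rw [hu_const]
    simp [visViva, velocity]
  · simp only [add_div, div_self hT, hper (t / T)]
  · simp only [div_eq_inv_mul]
    exact ((hcrit.smul_mass _).isFixedEnergySolution
      (fun i => mul_ne_zero (by positivity) (hm i)) hΩ hU hu hper huΩ hpot_ne
      hvirial).comp_mul_left

end CriticalLoops

end NBody

/-- **Lemma 2.1**. A critical point `ũ` of the fixed-energy functional `f` with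
`f(ũ) > 0` gives, after the time rescaling `q(t) = ũ(t/T)`, a non-constant `T`-periodic
non-collision solution of the fixed-energy system (Ph). -/
theorem critical_point_gives_solution
    (n N : ℕ) (hN : 2 ≤ N)
    (m : Fin N → ℝ) (hm : ∀ i, 0 < m i) (h : ℝ)
    (V : Fin N → Fin N → EuclideanSpace ℝ (Fin n) → ℝ)
    (hV_C1 : ∀ i j, i ≠ j → ContDiffOn ℝ 1 (V i j) {ξ | ξ ≠ 0})
    (Vtot : (Fin N → EuclideanSpace ℝ (Fin n)) → ℝ)
    (hVtot : ∀ X, Vtot X =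
      (1/2) * ∑ i, ∑ j ∈ univ.filter (fun j => j ≠ i), V i j (X i - X j))
    (f : (ℝ → Fin N → EuclideanSpace ℝ (Fin n)) → ℝ)
    (hf : ∀ u : ℝ → Fin N → EuclideanSpace ℝ (Fin n), f u =
      (1/2) * (∫ t in (0:ℝ)..1, ∑ i, m i * ‖deriv (fun s => u s i) t‖ ^ 2)
        * (∫ t in (0:ℝ)..1, (h - Vtot (u t))))
    (u : ℝ → Fin N → EuclideanSpace ℝ (Fin n))
    (hu_C2 : ContDiff ℝ 2 u)
    (hu_per : ∀ t : ℝ, u (t + 1) = u t)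
    (hu_noncoll : ∀ t : ℝ, ∀ i j, i ≠ j → u t i ≠ u t j)
    -- `ũ` is a critical point of `f`
    (hu_crit : ∀ v : ℝ → Fin N → EuclideanSpace ℝ (Fin n),
      ContDiff ℝ 1 v → (∀ t : ℝ, v (t + 1) = v t) →
      HasDerivAt (fun s : ℝ => f (fun t => u t + s • v t)) 0 0)
    (hf_pos : 0 < f u)
    (T : ℝ) (hT : 0 < T)
    (hT_def : 1 / T ^ 2 =
      (∫ t in (0:ℝ)..1, (h - Vtot (u t)))
        / ((1/2) * ∫ t in (0:ℝ)..1, ∑ i, m i * ‖deriv (fun s => u s i) t‖ ^ 2)) :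
    (∃ t₁ t₂ : ℝ, u (t₁ / T) ≠ u (t₂ / T)) ∧
    (∀ t : ℝ, u ((t + T) / T) = u (t / T)) ∧
    (∀ t : ℝ, ∀ i j, i ≠ j → u (t / T) i ≠ u (t / T) j) ∧
    (∀ t : ℝ, ∀ i,
      m i • deriv (deriv (fun s => u (s / T) i)) t
        + gradient (fun y => Vtot (Function.update (u (t / T)) i y)) (u (t / T) i)
        = 0) ∧
    (∀ t : ℝ,
      (1/2) * ∑ i, m i * ‖deriv (fun s => u (s / T) i) t‖ ^ 2
        + Vtot (u (t / T)) = h) := by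
  obtain rfl : Vtot = pairPotential V := funext hVtot
  obtain rfl : f = fixedEnergyFunctional m h (pairPotential V) := funext hf
  obtain ⟨hne, hper, hsol⟩ := critical_point_gives_solution_general (fun i => (hm i).ne')
    isOpen_noncollisionSet (contDiffOn_pairPotential hV_C1) (hu_C2.of_le one_le_two) hu_per
    hu_noncoll hu_crit hT.ne' hT_def
  exact ⟨hne, hper, fun t => hu_noncoll (t / T), hsol.newton, hsol.energy⟩
end

section
/- (Palais' principle of symmetric criticality for finite groups.) Let H be a real Hilbert space, G a finite group, and ρ : G → (linear isometric automorphisms of H) a group homomorphism (an orthogonal representation). Let f : H → ℝ be continuously differentiable and G-invariant, i.e. f(ρ(σ)x) = f(x) for all σ ∈ G and x ∈ H. Let S = {x ∈ H : ρ(σ)x = x for all σ ∈ G} be the fixed-point subspace (a closed linear subspace of H). If x ∈ S is a critical point of the restriction of f to S — that is, the Fréchet derivative of f at x vanishes on every vector of S — then x is a critical point of f on all of H: the Fréchet derivative of f at x is the zero functional. -/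
/-!
Differentiating `f ∘ T = f` at a fixed point `x` of `T` shows that `f'(x)` is `T`-invariant.
Let `g` be its Riesz vector. Then `⟪g, T g⟫ = f'(x) (T g) = f'(x) g = ‖g‖²`, which is the equality
case of Cauchy–Schwarz when `T` is a contraction, so `T g = g`. If this holds for every symmetry
`T`, then `g` is a fixed vector, and criticality along fixed vectors gives `‖g‖² = f'(x) g = 0`.
-/

open InnerProductSpace Topology

theorem comp_eq_of_hasFDerivAt_of_comp_eventuallyEq {𝕜 E F : Type*} [NontriviallyNormedField 𝕜]
    [NormedAddCommGroup E] [NormedSpace 𝕜 E] [NormedAddCommGroup F] [NormedSpace 𝕜 F]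
    {f : E → F} {f' : E →L[𝕜] F} {T : E → E} {T' : E →L[𝕜] E} {x : E}
    (hf : HasFDerivAt f f' x) (hT : HasFDerivAt T T' x) (hx : T x = x)
    (hfT : f ∘ T =ᶠ[𝓝 x] f) : f' ∘L T' = f' := by
  have hcomp : HasFDerivAt (f ∘ T) (f' ∘L T') x := HasFDerivAt.comp x (hx.symm ▸ hf) hT
  exact hcomp.unique (hf.congr_of_eventuallyEq hfT)

section Hilbert

variable {𝕜 H : Type*} [RCLike 𝕜] [NormedAddCommGroup H] [InnerProductSpace 𝕜 H] [CompleteSpace H]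

theorem map_toDual_symm_eq_of_comp_eq {T : H →L[𝕜] H} (hT : ‖T‖ ≤ 1) {φ : StrongDual 𝕜 H}
    (hφ : φ ∘L T = φ) : T ((toDual 𝕜 H).symm φ) = (toDual 𝕜 H).symm φ := by
  set g := (toDual 𝕜 H).symm φ with hg
  have hnorm : ‖T g‖ ≤ ‖g‖ := by simpa using T.le_of_opNorm_le hT g
  have hinner : ⟪g, T g⟫_𝕜 = ⟪g, g⟫_𝕜 := by
    simpa only [hg, toDual_symm_apply, ContinuousLinearMap.comp_apply] using DFunLike.congr_fun hφ g
  refine eq_of_norm_le_re_inner_eq_norm_sq (𝕜 := 𝕜) hnorm ?_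
  rw [inner_re_symm, hinner, inner_self_eq_norm_sq]

theorem eq_zero_of_apply_toDual_symm_eq_zero {φ : StrongDual 𝕜 H}
    (hφ : φ ((toDual 𝕜 H).symm φ) = 0) : φ = 0 := by
  rwa [← toDual_symm_apply, inner_self_eq_zero, EmbeddingLike.map_eq_zero_iff] at hφ

theorem palais_symmetric_criticality_general {ι : Type*} {T : ι → H →L[𝕜] H}
    (hT : ∀ i, ‖T i‖ ≤ 1) {f : H → 𝕜} {f' : StrongDual 𝕜 H} {x : H} (hf : HasFDerivAt f f' x)
    (hinv : ∀ i, f ∘ T i =ᶠ[𝓝 x] f) (hx : ∀ i, T i x = x)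
    (hcrit : ∀ v, (∀ i, T i v = v) → f' v = 0) : f' = 0 := by
  have hf'inv (i : ι) : f' ∘L T i = f' :=
    comp_eq_of_hasFDerivAt_of_comp_eventuallyEq hf (T i).hasFDerivAt (hx i) (hinv i)
  exact eq_zero_of_apply_toDual_symm_eq_zero <|
    hcrit _ fun i ↦ map_toDual_symm_eq_of_comp_eq (hT i) (hf'inv i)

end Hilbert

/-- **Palais' principle of symmetric criticality** (finite groups). If `f : H → ℝ` is a
`C¹` functional invariant under an orthogonal representation `ρ` of a finite group `G`
on a real Hilbert space `H`, and `x` lies in the fixed-point subspace `S` and is a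
critical point of `f` restricted to `S`, then `x` is a critical point of `f` on `H`. -/
theorem palais_symmetric_criticality
    (H : Type*) [NormedAddCommGroup H] [InnerProductSpace ℝ H] [CompleteSpace H]
    (G : Type*) [Group G] [Finite G]
    (ρ : G →* (H ≃ₗᵢ[ℝ] H))
    (f : H → ℝ) (hf : ContDiff ℝ 1 f)
    (hinv : ∀ (σ : G) (x : H), f (ρ σ x) = f x)
    (x : H) (hx : ∀ σ : G, ρ σ x = x)
    (hcrit : ∀ v : H, (∀ σ : G, ρ σ v = v) → fderiv ℝ f x v = 0) :
    fderiv ℝ f x = 0 :=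
  palais_symmetric_criticality_general (T := fun σ ↦ (ρ σ).toLinearIsometry.toContinuousLinearMap)
    (fun σ ↦ (ρ σ).toLinearIsometry.norm_toContinuousLinearMap_le)
    (hf.differentiable one_ne_zero x).hasFDerivAt (fun σ ↦ .of_forall (hinv σ)) hx hcrit
end

section
/- (Sobolev inequality for mean-zero periodic functions.) Let T > 0 and let q : ℝ → ℝ^n be continuously differentiable with q(t + T) = q(t) for all t and ∫₀^T q(t) dt = 0. Then for every t ∈ [0, T], |q(t)| ≤ √(T/12) · (∫₀^T |q̇(s)|² ds)^{1/2}; in particular max_{0 ≤ t ≤ T} |q(t)|² ≤ (T/12) ∫₀^T |q̇(s)|² ds. -/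
/-!
For a function `q` on `[a, b]` with `q a = q b`, integrate `q'` by parts against the weight `s - t`
on each side of `t`, shifted so that the two pieces equal `± (b - a) / 2` at `t` and agree at the
two endpoints. The endpoint terms cancel, the jump at `t` picks out `q t`, and
`(b - a) (q t - ⨍ q) = ∫ w q'` for this sawtooth weight `w`. Since `∫ w ^ 2 = (b - a) ^ 3 / 12`,
the Cauchy-Schwarz inequality concludes.
-/

open MeasureTheory Set

section CauchySchwarz

variable {α 𝕜 E : Type*} [MeasurableSpace α] {μ : Measure α} [NormedRing 𝕜]
  [NormedAddCommGroup E] [NormedSpace ℝ E] [Module 𝕜 E] [IsBoundedSMul 𝕜 E] {f : α → 𝕜} {g : α → E}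

lemma norm_integral_smul_le_sqrt_mul_sqrt (hf : MemLp f 2 μ) (hg : MemLp g 2 μ) :
    ‖∫ x, f x • g x ∂μ‖ ≤ √(∫ x, ‖f x‖ ^ 2 ∂μ) * √(∫ x, ‖g x‖ ^ 2 ∂μ) := by
  have holder : ∫ x, ‖f x‖ * ‖g x‖ ∂μ ≤ √(∫ x, ‖f x‖ ^ 2 ∂μ) * √(∫ x, ‖g x‖ ^ 2 ∂μ) := by
    simpa only [norm_norm, Real.rpow_two, ← Real.sqrt_eq_rpow] using
      integral_mul_norm_le_Lp_mul_Lq (f := fun x ↦ ‖f x‖) (g := fun x ↦ ‖g x‖)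
        Real.HolderConjugate.two_two (by simpa using hf.norm) (by simpa using hg.norm)
  calc ‖∫ x, f x • g x ∂μ‖
      ≤ ∫ x, ‖f x‖ * ‖g x‖ ∂μ :=
        norm_integral_le_of_norm_le (hf.norm.integrable_mul hg.norm)
          (.of_forall fun x ↦ norm_smul_le (f x) (g x))
    _ ≤ √(∫ x, ‖f x‖ ^ 2 ∂μ) * √(∫ x, ‖g x‖ ^ 2 ∂μ) := holder

end CauchySchwarz

section SplitAtPoint

variable {α β : Type*} [LinearOrder α]

lemma eqOn_uIoc_ite_le_left {a t : α} (f g : α → β) (hat : a ≤ t) :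
    EqOn f (fun s ↦ if s ≤ t then f s else g s) (uIoc a t) := fun s hs ↦ by
  rw [uIoc_of_le hat] at hs
  exact (if_pos hs.2).symm

lemma eqOn_uIoc_ite_le_right {b t : α} (f g : α → β) (htb : t ≤ b) :
    EqOn g (fun s ↦ if s ≤ t then f s else g s) (uIoc t b) := fun s hs ↦ by
  rw [uIoc_of_le htb] at hs
  exact (if_neg hs.1.not_ge).symm

variable {E : Type*} [NormedAddCommGroup E] {f g : ℝ → E} {μ : Measure ℝ} {a b t : ℝ}

lemma intervalIntegrable_ite_le (hat : a ≤ t) (htb : t ≤ b)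
    (hf : IntervalIntegrable f μ a t) (hg : IntervalIntegrable g μ t b) :
    IntervalIntegrable (fun s ↦ if s ≤ t then f s else g s) μ a b :=
  (hf.congr (eqOn_uIoc_ite_le_left f g hat)).trans (hg.congr (eqOn_uIoc_ite_le_right f g htb))

lemma intervalIntegral_ite_le [NormedSpace ℝ E] (hat : a ≤ t) (htb : t ≤ b)
    (hf : IntervalIntegrable f μ a t) (hg : IntervalIntegrable g μ t b) :
    ∫ s in a..b, (if s ≤ t then f s else g s) ∂μ = (∫ s in a..t, f s ∂μ) + ∫ s in t..b, g s ∂μ := by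
  have left := eqOn_uIoc_ite_le_left f g hat
  have right := eqOn_uIoc_ite_le_right f g htb
  rw [← intervalIntegral.integral_add_adjacent_intervals (hf.congr left) (hg.congr right),
    ← intervalIntegral.integral_congr_ae (.of_forall left),
    ← intervalIntegral.integral_congr_ae (.of_forall right)]

end SplitAtPoint

/-- The sawtooth `s ↦ s - t ± L / 2`, with slope one and a downward jump of height `L` at `t`.
On an interval of length `L` around `t` it is the mean-zero Peano kernel of the map `q ↦ q t - ⨍ q`
on functions with equal boundary values, multiplied by `L`. -/
noncomputable def sawtooth (L t s : ℝ) : ℝ :=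
  if s ≤ t then s - (t - L / 2) else s - (t + L / 2)

section Sawtooth

variable {a b t : ℝ}

lemma measurable_sawtooth (L t : ℝ) : Measurable (sawtooth L t) :=
  Measurable.ite measurableSet_Iic (by fun_prop) (by fun_prop)

lemma sawtooth_sq (L t s : ℝ) :
    sawtooth L t s ^ 2 = if s ≤ t then (s - (t - L / 2)) ^ 2 else (s - (t + L / 2)) ^ 2 :=
  apply_ite (· ^ 2) _ _ _

lemma memLp_sawtooth (L : ℝ) (hat : a ≤ t) (htb : t ≤ b) :
    MemLp (sawtooth L t) 2 (volume.restrict (Ioc a b)) := by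
  refine (memLp_two_iff_integrable_sq (measurable_sawtooth L t).aestronglyMeasurable).2 ?_
  simp only [sawtooth_sq]
  exact (intervalIntegrable_ite_le hat htb (Continuous.intervalIntegrable (by fun_prop) _ _)
    (Continuous.intervalIntegrable (by fun_prop) _ _)).1

lemma integral_sub_const_sq (a b c : ℝ) :
    ∫ s in a..b, (s - c) ^ 2 = ((b - c) ^ 3 - (a - c) ^ 3) / 3 := by
  rw [intervalIntegral.integral_comp_sub_right (fun x ↦ x ^ 2), integral_pow]
  norm_num

lemma integral_sawtooth_sq (hat : a ≤ t) (htb : t ≤ b) :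
    ∫ s in a..b, sawtooth (b - a) t s ^ 2 = (b - a) ^ 3 / 12 := by
  simp only [sawtooth_sq]
  rw [intervalIntegral_ite_le hat htb (Continuous.intervalIntegrable (by fun_prop) _ _)
    (Continuous.intervalIntegrable (by fun_prop) _ _), integral_sub_const_sq, integral_sub_const_sq]
  ring

variable {E : Type*} [NormedAddCommGroup E] [NormedSpace ℝ E] [CompleteSpace E] {q q' : ℝ → E}

lemma integral_sub_const_smul_deriv (hab : a ≤ b) (c : ℝ) (hq : ContinuousOn q (Icc a b))
    (hqq' : ∀ s ∈ Ioo a b, HasDerivWithinAt q (q' s) (Ioi s) s)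
    (hq' : IntervalIntegrable q' volume a b) :
    ∫ s in a..b, (s - c) • q' s = (b - c) • q b - (a - c) • q a - ∫ s in a..b, q s := by
  simpa only [one_smul] using
    intervalIntegral.integral_smul_deriv_eq_deriv_smul_of_hasDeriv_right
      (u := fun s ↦ s - c) (u' := fun _ ↦ (1 : ℝ)) (by fun_prop) (by rwa [uIcc_of_le hab])
      (fun s _ ↦ ((hasDerivAt_id s).sub_const c).hasDerivWithinAt)
      (by rwa [min_eq_left hab, max_eq_right hab]) intervalIntegrable_const hq'

lemma integral_sawtooth_smul_deriv (ht : t ∈ Icc a b) (hq : ContinuousOn q (Icc a b))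
    (hqq' : ∀ s ∈ Ioo a b, HasDerivWithinAt q (q' s) (Ioi s) s)
    (hq' : IntervalIntegrable q' volume a b) (hqab : q a = q b) :
    ∫ s in a..b, sawtooth (b - a) t s • q' s = (b - a) • q t - ∫ s in a..b, q s := by
  obtain ⟨hat, htb⟩ := ht
  have hq_left : ContinuousOn q (Icc a t) := hq.mono (Icc_subset_Icc_right htb)
  have hq_right : ContinuousOn q (Icc t b) := hq.mono (Icc_subset_Icc_left hat)
  have hq'_left : IntervalIntegrable q' volume a t :=
    hq'.mono_set (uIcc_subset_uIcc_left (mem_uIcc_of_le hat htb))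
  have hq'_right : IntervalIntegrable q' volume t b :=
    hq'.mono_set (uIcc_subset_uIcc_right (mem_uIcc_of_le hat htb))
  simp only [sawtooth, ite_smul]
  rw [intervalIntegral_ite_le hat htb (hq'_left.continuousOn_smul (by fun_prop))
      (hq'_right.continuousOn_smul (by fun_prop)),
    integral_sub_const_smul_deriv hat _ hq_left
      (fun s hs ↦ hqq' s (Ioo_subset_Ioo_right htb hs)) hq'_left,
    integral_sub_const_smul_deriv htb _ hq_right
      (fun s hs ↦ hqq' s (Ioo_subset_Ioo_left hat hs)) hq'_right,
    ← intervalIntegral.integral_add_adjacent_intervals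
      (hq_left.intervalIntegrable_of_Icc hat) (hq_right.intervalIntegrable_of_Icc htb), hqab]
  module

lemma norm_sub_intervalAverage_le (hab : a < b) (ht : t ∈ Icc a b) (hq : ContinuousOn q (Icc a b))
    (hqq' : ∀ s ∈ Ioo a b, HasDerivWithinAt q (q' s) (Ioi s) s)
    (hq' : MemLp q' 2 (volume.restrict (Ioc a b))) (hqab : q a = q b) :
    ‖q t - ⨍ s in a..b, q s‖ ≤ √((b - a) / 12) * √(∫ s in a..b, ‖q' s‖ ^ 2) := by
  have hL : 0 < b - a := sub_pos.2 hab
  have hq'_int : IntervalIntegrable q' volume a b :=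
    (intervalIntegrable_iff_integrableOn_Ioc_of_le hab.le).2 (hq'.integrable one_le_two)
  have representation :
      (b - a) • (q t - ⨍ s in a..b, q s) = ∫ s in a..b, sawtooth (b - a) t s • q' s := by
    rw [integral_sawtooth_smul_deriv ht hq hqq' hq'_int hqab, interval_average_eq, smul_sub,
      smul_inv_smul₀ hL.ne']
  have cauchy_schwarz : ‖∫ s in a..b, sawtooth (b - a) t s • q' s‖ ≤
      √(∫ s in a..b, sawtooth (b - a) t s ^ 2) * √(∫ s in a..b, ‖q' s‖ ^ 2) := by
    simpa only [intervalIntegral.integral_of_le hab.le, Real.norm_eq_abs, sq_abs] using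
      norm_integral_smul_le_sqrt_mul_sqrt (memLp_sawtooth (b - a) ht.1 ht.2) hq'
  refine le_of_mul_le_mul_left ?_ hL
  calc (b - a) * ‖q t - ⨍ s in a..b, q s‖
      = ‖∫ s in a..b, sawtooth (b - a) t s • q' s‖ := by
        rw [← representation, norm_smul_of_nonneg hL.le]
    _ ≤ √((b - a) ^ 3 / 12) * √(∫ s in a..b, ‖q' s‖ ^ 2) := by
        rwa [integral_sawtooth_sq ht.1 ht.2] at cauchy_schwarz
    _ = (b - a) * (√((b - a) / 12) * √(∫ s in a..b, ‖q' s‖ ^ 2)) := by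
        rw [show (b - a) ^ 3 / 12 = (b - a) ^ 2 * ((b - a) / 12) by ring,
          Real.sqrt_mul (sq_nonneg _), Real.sqrt_sq hL.le, mul_assoc]

theorem sobolev_inequality_periodic_general (hab : a < b) (hq : ContinuousOn q (Icc a b))
    (hqq' : ∀ s ∈ Ioo a b, HasDerivWithinAt q (q' s) (Ioi s) s)
    (hq' : MemLp q' 2 (volume.restrict (Ioc a b))) (hqab : q a = q b) :
    (∀ t ∈ Icc a b,
      ‖q t - ⨍ s in a..b, q s‖ ≤ √((b - a) / 12) * √(∫ s in a..b, ‖q' s‖ ^ 2)) ∧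
    (∀ t ∈ Icc a b,
      ‖q t - ⨍ s in a..b, q s‖ ^ 2 ≤ (b - a) / 12 * ∫ s in a..b, ‖q' s‖ ^ 2) := by
  have bound := fun t (ht : t ∈ Icc a b) ↦ norm_sub_intervalAverage_le hab ht hq hqq' hq' hqab
  have hL : 0 ≤ (b - a) / 12 := div_nonneg (sub_nonneg.2 hab.le) (by norm_num)
  have energy_nonneg : 0 ≤ ∫ s in a..b, ‖q' s‖ ^ 2 :=
    intervalIntegral.integral_nonneg hab.le fun s _ ↦ sq_nonneg ‖q' s‖
  refine ⟨bound, fun t ht ↦ (Real.le_sqrt (norm_nonneg _) (mul_nonneg hL energy_nonneg)).1 ?_⟩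
  exact (bound t ht).trans_eq (Real.sqrt_mul hL _).symm

end Sawtooth

/-- **Sobolev inequality** for mean-zero `T`-periodic `C¹` curves:
`max_{0 ≤ t ≤ T} |q(t)| ≤ √(T/12) (∫₀ᵀ |q̇|²)^{1/2}`. -/
theorem sobolev_inequality_periodic
    (n : ℕ) (T : ℝ) (hT : 0 < T)
    (q : ℝ → EuclideanSpace ℝ (Fin n))
    (hq_C1 : ContDiff ℝ 1 q)
    (hq_per : ∀ t : ℝ, q (t + T) = q t)
    (hq_mean : (∫ t in (0:ℝ)..T, q t) = 0) :
    (∀ t ∈ Set.Icc (0:ℝ) T,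
      ‖q t‖ ≤ Real.sqrt (T / 12) * Real.sqrt (∫ s in (0:ℝ)..T, ‖deriv q s‖ ^ 2)) ∧
    (∀ t ∈ Set.Icc (0:ℝ) T,
      ‖q t‖ ^ 2 ≤ (T / 12) * ∫ s in (0:ℝ)..T, ‖deriv q s‖ ^ 2) := by
  have hq' : Continuous (deriv q) := hq_C1.continuous_deriv le_rfl
  simpa only [interval_average_eq, hq_mean, smul_zero, sub_zero] using
    sobolev_inequality_periodic_general hT hq_C1.continuous.continuousOn
      (fun s _ ↦ (hq_C1.differentiable one_ne_zero s).hasDerivAt.hasDerivWithinAt)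
      ((memLp_two_iff_integrable_sq_norm hq'.aestronglyMeasurable).2
        (hq'.norm.pow 2).integrableOn_Ioc)
      (by simpa only [zero_add] using (hq_per 0).symm)
end

section
/- (Coti Zelati's inequality.) Let N ≥ 2, α > 0, m_1,…,m_N > 0, and let x_1,…,x_N ∈ ℝ^n be pairwise distinct points (x_i ≠ x_j for i ≠ j). Then Σ_{1≤i<j≤N} m_i m_j / |x_i − x_j|^α ≥ C_α · (Σ_{i=1}^N m_i |x_i|²)^{−α/2}, where C_α = (Σ_{i=1}^N m_i)^{−α/2} · (Σ_{1≤i<j≤N} m_i m_j)^{(2+α)/2}. -/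
open Finset

/-!
Put `w = m_i m_j` and `d = |x_i - x_j|` for a pair `i < j`. Hölder's inequality gives
`(∑ w) ^ (1 + α / 2) ≤ (∑ w d²) ^ (α / 2) * ∑ w d ^ (-α)`, and Lagrange's identity
`∑ w d² = (∑ m_i) (∑ m_i |x_i|²) - |∑ m_i x_i|²` bounds the first factor on the right.
-/

section RealPowers

lemma sum_rpow_one_add_le_sum_mul_rpow_mul_sum_mul_rpow_neg {κ : Type*} {s : Finset κ}
    {w t : κ → ℝ} {b : ℝ} (hb : 0 ≤ b) (hw : ∀ k ∈ s, 0 ≤ w k) (ht : ∀ k ∈ s, 0 < t k) :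
    (∑ k ∈ s, w k) ^ (1 + b) ≤ (∑ k ∈ s, w k * t k) ^ b * ∑ k ∈ s, w k * t k ^ (-b) := by
  have hp : 1 + b ≠ 0 := by positivity
  have hwt : ∀ k ∈ s, 0 ≤ w k * t k := fun k hk ↦ mul_nonneg (hw k hk) (ht k hk).le
  have hwtb : ∀ k ∈ s, 0 ≤ w k * t k ^ (-b) :=
    fun k hk ↦ mul_nonneg (hw k hk) (Real.rpow_nonneg (ht k hk).le _)
  have mul_inv_eq : ∀ k ∈ s, w k * t k * (t k)⁻¹ = w k :=
    fun k hk ↦ mul_inv_cancel_right₀ (ht k hk).ne' _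
  have mul_inv_rpow_eq : ∀ k ∈ s, w k * t k * (t k)⁻¹ ^ (1 + b) = w k * t k ^ (-b) :=
    fun k hk ↦ by
      rw [Real.inv_rpow (ht k hk).le, Real.rpow_one_add' (ht k hk).le hp,
        Real.rpow_neg (ht k hk).le, mul_inv, ← mul_assoc, mul_inv_eq k hk]
  have hoelder : ∑ k ∈ s, w k ≤ (∑ k ∈ s, w k * t k) ^ (1 - (1 + b)⁻¹)
      * (∑ k ∈ s, w k * t k ^ (-b)) ^ (1 + b)⁻¹ := by
    have h := Real.inner_le_weight_mul_Lp_of_nonneg s.attach (le_add_of_nonneg_right hb)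
      (fun k ↦ w k * t k) (fun k ↦ (t k)⁻¹) (fun k ↦ hwt k k.2) fun k ↦ (inv_pos.2 (ht k k.2)).le
    rwa [sum_attach s fun k ↦ w k * t k * (t k)⁻¹, sum_attach s fun k ↦ w k * t k,
      sum_attach s fun k ↦ w k * t k * (t k)⁻¹ ^ (1 + b), sum_congr rfl mul_inv_eq,
      sum_congr rfl mul_inv_rpow_eq] at h
  calc (∑ k ∈ s, w k) ^ (1 + b)
      ≤ ((∑ k ∈ s, w k * t k) ^ (1 - (1 + b)⁻¹)
          * (∑ k ∈ s, w k * t k ^ (-b)) ^ (1 + b)⁻¹) ^ (1 + b) :=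
        Real.rpow_le_rpow (sum_nonneg hw) hoelder (by positivity)
    _ = (∑ k ∈ s, w k * t k) ^ b * ∑ k ∈ s, w k * t k ^ (-b) := by
        rw [Real.mul_rpow (Real.rpow_nonneg (sum_nonneg hwt) _)
            (Real.rpow_nonneg (sum_nonneg hwtb) _), ← Real.rpow_mul (sum_nonneg hwt),
          Real.rpow_inv_rpow (sum_nonneg hwtb) hp, sub_mul, inv_mul_cancel₀ hp, one_mul,
          add_sub_cancel_left]

/-- If `a * b = 0` and `p ≠ 0`, the left side is `0` by the convention `0 ^ (-p) = 0`. -/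
lemma rpow_neg_mul_mul_rpow_neg_le {a b c d p : ℝ} (ha : 0 ≤ a) (hb : 0 ≤ b) (hd : 0 ≤ d)
    (h : c ≤ (a * b) ^ p * d) : a ^ (-p) * c * b ^ (-p) ≤ d := by
  calc a ^ (-p) * c * b ^ (-p) = c / (a * b) ^ p := by
        rw [Real.rpow_neg ha, Real.rpow_neg hb, Real.mul_rpow ha hb, div_eq_mul_inv, mul_inv]
        ring
    _ ≤ d := div_le_of_le_mul₀ (Real.rpow_nonneg (mul_nonneg ha hb) p) hd (mul_comm d _ ▸ h)

end RealPowers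

section Lagrange

variable {ι E : Type*} [NormedAddCommGroup E] [InnerProductSpace ℝ E]

lemma sum_sum_mul_mul_sq_norm_sub (s : Finset ι) (m : ι → ℝ) (x : ι → E) :
    ∑ i ∈ s, ∑ j ∈ s, m i * m j * ‖x i - x j‖ ^ 2
      = 2 * ((∑ i ∈ s, m i) * ∑ i ∈ s, m i * ‖x i‖ ^ 2 - ‖∑ i ∈ s, m i • x i‖ ^ 2) := by
  have norm_sq_eq : ‖∑ i ∈ s, m i • x i‖ ^ 2
      = ∑ i ∈ s, ∑ j ∈ s, m i * m j * inner ℝ (x i) (x j) := by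
    rw [← real_inner_self_eq_norm_sq, sum_inner]
    simp only [inner_sum, real_inner_smul_left, real_inner_smul_right, mul_assoc, mul_left_comm]
  have mul_eq_right : (∑ i ∈ s, m i) * ∑ i ∈ s, m i * ‖x i‖ ^ 2
      = ∑ i ∈ s, ∑ j ∈ s, m i * m j * ‖x j‖ ^ 2 := by
    simp only [sum_mul_sum, mul_assoc]
  have mul_eq_left : (∑ i ∈ s, m i) * ∑ i ∈ s, m i * ‖x i‖ ^ 2
      = ∑ i ∈ s, ∑ j ∈ s, m i * m j * ‖x i‖ ^ 2 := by
    rw [mul_eq_right, sum_comm]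
    simp only [mul_comm (m _) (m _)]
  calc ∑ i ∈ s, ∑ j ∈ s, m i * m j * ‖x i - x j‖ ^ 2
      = ∑ i ∈ s, ∑ j ∈ s, m i * m j * ‖x i‖ ^ 2 + ∑ i ∈ s, ∑ j ∈ s, m i * m j * ‖x j‖ ^ 2
          - 2 * ∑ i ∈ s, ∑ j ∈ s, m i * m j * inner ℝ (x i) (x j) := by
        simp only [mul_sum, ← sum_add_distrib, ← sum_sub_distrib, norm_sub_sq_real]
        exact sum_congr rfl fun i _ ↦ sum_congr rfl fun j _ ↦ by ring
    _ = 2 * ((∑ i ∈ s, m i) * ∑ i ∈ s, m i * ‖x i‖ ^ 2 - ‖∑ i ∈ s, m i • x i‖ ^ 2) := by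
        rw [← mul_eq_left, ← mul_eq_right, ← norm_sq_eq]
        ring

variable [Fintype ι] [LinearOrder ι]

lemma two_nsmul_sum_sum_lt {A : Type*} [AddCommMonoid A] {f : ι → ι → A}
    (symm : ∀ i j, f i j = f j i) (diag : ∀ i, f i i = 0) :
    2 • ∑ i, ∑ j with i < j, f i j = ∑ i, ∑ j, f i j := by
  have swap : ∑ i, ∑ j with i < j, f i j = ∑ i, ∑ j with j < i, f i j := by
    simp only [sum_filter]
    rw [sum_comm]
    simp only [symm _ _]
  calc 2 • ∑ i, ∑ j with i < j, f i j
      = ∑ i, (∑ j with i < j, f i j + ∑ j with j < i, f i j) := by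
        rw [two_nsmul, sum_add_distrib, ← swap]
    _ = ∑ i, ∑ j, f i j := sum_congr rfl fun i _ ↦ by
        simp only [sum_filter, ← sum_add_distrib]
        refine sum_congr rfl fun j _ ↦ ?_
        rcases lt_trichotomy i j with hij | rfl | hji
        · rw [if_pos hij, if_neg hij.not_gt, add_zero]
        · rw [if_neg (lt_irrefl i), add_zero, diag]
        · rw [if_neg hji.not_gt, if_pos hji, zero_add]

lemma sum_sum_lt_mul_mul_sq_norm_sub (m : ι → ℝ) (x : ι → E) :
    ∑ i, ∑ j with i < j, m i * m j * ‖x i - x j‖ ^ 2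
      = (∑ i, m i) * ∑ i, m i * ‖x i‖ ^ 2 - ‖∑ i, m i • x i‖ ^ 2 := by
  have h := two_nsmul_sum_sum_lt (f := fun i j ↦ m i * m j * ‖x i - x j‖ ^ 2)
    (fun i j ↦ by rw [norm_sub_rev, mul_comm (m i)])
    (fun i ↦ by rw [sub_self, norm_zero, zero_pow two_ne_zero, mul_zero])
  rw [sum_sum_mul_mul_sq_norm_sub, nsmul_eq_mul, Nat.cast_ofNat] at h
  exact mul_left_cancel₀ two_ne_zero h

/-- Multiplied out to avoid a negative power of `∑ i, m i * ‖x i‖ ^ 2`, which may vanish. -/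
theorem coti_zelati_inequality_general {α : ℝ} (hα : 0 ≤ α) {m : ι → ℝ} (hm : ∀ i, 0 ≤ m i)
    {x : ι → E} (hx : Function.Injective x) :
    (∑ i, ∑ j with i < j, m i * m j) ^ ((2 + α) / 2)
      ≤ ((∑ i, m i) * ∑ i, m i * ‖x i‖ ^ 2) ^ (α / 2)
        * ∑ i, ∑ j with i < j, m i * m j / ‖x i - x j‖ ^ α := by
  have hmm : ∀ i j, 0 ≤ m i * m j := fun i j ↦ mul_nonneg (hm i) (hm j)
  have hoelder : (∑ i, ∑ j with i < j, m i * m j) ^ (1 + α / 2)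
      ≤ (∑ i, ∑ j with i < j, m i * m j * ‖x i - x j‖ ^ 2) ^ (α / 2)
        * ∑ i, ∑ j with i < j, m i * m j * (‖x i - x j‖ ^ 2) ^ (-(α / 2)) := by
    simp only [sum_sigma']
    refine sum_rpow_one_add_le_sum_mul_rpow_mul_sum_mul_rpow_neg (by positivity)
      (fun p _ ↦ hmm p.1 p.2) fun p hp ↦ ?_
    have hlt : p.1 < p.2 := (mem_filter.1 (mem_sigma.1 hp).2).2
    exact pow_pos (norm_sub_pos_iff.2 (hx.ne hlt.ne)) 2
  have lagrange : ∑ i, ∑ j with i < j, m i * m j * ‖x i - x j‖ ^ 2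
      ≤ (∑ i, m i) * ∑ i, m i * ‖x i‖ ^ 2 := by
    rw [sum_sum_lt_mul_mul_sq_norm_sub]
    exact sub_le_self _ (sq_nonneg _)
  have rpow_eq : ∀ i j, m i * m j * (‖x i - x j‖ ^ 2) ^ (-(α / 2))
      = m i * m j / ‖x i - x j‖ ^ α := fun i j ↦ by
    rw [Real.rpow_neg (sq_nonneg _), ← Real.rpow_natCast_mul (norm_nonneg _), Nat.cast_ofNat,
      mul_div_cancel₀ α two_ne_zero, div_eq_mul_inv]
  simp only [rpow_eq] at hoelder
  rw [add_div, div_self two_ne_zero]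
  refine hoelder.trans (mul_le_mul_of_nonneg_right ?_ ?_)
  · exact Real.rpow_le_rpow
      (sum_nonneg fun i _ ↦ sum_nonneg fun j _ ↦ mul_nonneg (hmm i j) (sq_nonneg _))
      lagrange (by positivity)
  · exact sum_nonneg fun i _ ↦ sum_nonneg fun j _ ↦
      div_nonneg (hmm i j) (Real.rpow_nonneg (norm_nonneg _) α)

end Lagrange

/-- **Coti Zelati's inequality**: for pairwise distinct points `x₁, …, x_N` in `ℝⁿ`,
`∑_{i<j} m_i m_j / |x_i - x_j|^α ≥ C_α (∑ m_i |x_i|²)^{-α/2}` with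
`C_α = (∑ m_i)^{-α/2} (∑_{i<j} m_i m_j)^{(2+α)/2}`. -/
theorem coti_zelati_inequality
    (n N : ℕ) (hN : 2 ≤ N) (α : ℝ) (hα : 0 < α)
    (m : Fin N → ℝ) (hm : ∀ i, 0 < m i)
    (x : Fin N → EuclideanSpace ℝ (Fin n))
    (hx : ∀ i j, i ≠ j → x i ≠ x j) :
    ∑ i, ∑ j ∈ univ.filter (fun j => i < j), m i * m j / ‖x i - x j‖ ^ α
      ≥ ((∑ i, m i) ^ (-α / 2)
          * (∑ i, ∑ j ∈ univ.filter (fun j => i < j), m i * m j) ^ ((2 + α) / 2))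
        * (∑ i, m i * ‖x i‖ ^ 2) ^ (-α / 2) := by
  have hm₀ : ∀ i, 0 ≤ m i := fun i ↦ (hm i).le
  rw [neg_div]
  exact rpow_neg_mul_mul_rpow_neg_le (sum_nonneg fun i _ ↦ hm₀ i)
    (sum_nonneg fun i _ ↦ mul_nonneg (hm₀ i) (sq_nonneg _))
    (sum_nonneg fun i _ ↦ sum_nonneg fun j _ ↦
      div_nonneg (mul_nonneg (hm₀ i) (hm₀ j)) (Real.rpow_nonneg (norm_nonneg _) α))
    (coti_zelati_inequality_general hα.le hm₀ fun i j ↦ not_imp_not.1 (hx i j))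
end

section
/- Let N ≥ 2, m_1,…,m_N > 0, h > 0, and let V_{ij} : ℝ^n \ {0} → ℝ (1 ≤ i ≠ j ≤ N) be continuously differentiable with V_{ij}(ξ) ≤ 0 for all ξ ≠ 0, and suppose there exist α > 2, A > 0, r₁ > 0 such that V_{ij}(ξ) ≤ −A|ξ|^{−α} for all 0 < |ξ| ≤ r₁. Set V(u) = (1/2) Σ_{i≠j} V_{ij}(u_i − u_j) and f(u) = (1/2)(∫₀¹ Σ m_i |u̇_i|² dt)·(∫₀¹ (h − V(u)) dt). Let u_k : ℝ → (ℝ^n)^N, k ∈ ℕ, be continuously differentiable, 1-periodic, antiperiodic (u_k^i(t+1/2) = −u_k^i(t)) and non-collision (u_k^i(t) ≠ u_k^j(t) for all t, i ≠ j), and let u : ℝ → (ℝ^n)^N be continuous and 1-periodic. Suppose u_k → u uniformly on [0,1], there is M with ∫₀¹ Σ_i m_i |u̇_k^i(t)|² dt ≤ M for all k, and u has a collision: there exist t₀ and i₀ ≠ j₀ with u^{i₀}(t₀) = u^{j₀}(t₀). Then f(u_k) → +∞ as k → ∞. -/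
open Finset

/-!
Only the colliding pair matters. Let `q` be its relative position, `δ = ‖q t₀‖` and `E = ∫₀¹ ‖q̇‖²`;
along the sequence `δ → 0`, while `δ > 0` because there are no collisions.

Cauchy–Schwarz gives `‖q t - q s‖² ≤ (t - s) ∫ₛᵗ ‖q̇‖²`. Since `q` is antiperiodic,
`q t₀ - q (t₀ + 1/2) = 2 q t₀`, so `8 δ² ≤ E`. In particular `τ = δ² / E` is at most one period,
and `‖q‖ ≤ 2 δ` on `[t₀, t₀ + τ]`. There the strong-force condition makes the integrand `h - V` at
least of order `(2 δ)^(-α)`, so `∫₀¹ (h - V)` is at least of order `τ δ^(-α)`. Multiplication by `E`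
cancels the denominator of `τ`: the action is at least of order `δ^(2 - α)`, which blows up since
`α > 2`.
-/

open Filter Function MeasureTheory Topology

theorem sum_le_single_of_nonpos {κ M : Type*} [AddCommMonoid M] [PartialOrder M]
    [IsOrderedAddMonoid M] {s : Finset κ} {f : κ → M} (hf : ∀ k ∈ s, f k ≤ 0) {a : κ}
    (ha : a ∈ s) : ∑ k ∈ s, f k ≤ f a :=
  single_le_sum (N := Mᵒᵈ) hf ha

theorem tendsto_of_periodic_of_forall_mem_Ico {κ X : Type*} [TopologicalSpace X] {l : Filter κ}
    {F : κ → ℝ → X} {f : ℝ → X} {T : ℝ} (hT : 0 < T) (hF : ∀ k, Periodic (F k) T)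
    (hf : Periodic f T) (hconv : ∀ t ∈ Set.Ico 0 T, Tendsto (F · t) l (𝓝 (f t))) (t : ℝ) :
    Tendsto (F · t) l (𝓝 (f t)) := by
  simpa only [toIcoMod, (hF _).sub_zsmul_eq, hf.sub_zsmul_eq] using hconv _ (toIcoMod_mem_Ico' hT t)

section PathEstimates

theorem sq_intervalIntegral_le {f : ℝ → ℝ} {a b : ℝ} (hab : a ≤ b)
    (hf : IntervalIntegrable f volume a b)
    (hf_sq : IntervalIntegrable (fun x => f x ^ 2) volume a b) :
    (∫ x in a..b, f x) ^ 2 ≤ (b - a) * ∫ x in a..b, f x ^ 2 := by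
  obtain rfl | hlt := hab.eq_or_lt
  · simp
  have hlen : 0 < b - a := sub_pos.2 hlt
  have jensen : (⨍ x in a..b, f x) ^ 2 ≤ ⨍ x in a..b, f x ^ 2 := by
    rw [Set.uIoc_of_le hab]
    exact (even_two.convexOn_pow (𝕜 := ℝ)).map_set_average_le (continuous_pow 2).continuousOn
      isClosed_univ (by simp [hlt]) (by simp) (by simp) hf.1 hf_sq.1
  rw [interval_average_eq_div, interval_average_eq_div, div_pow, div_le_div_iff₀ (by positivity)
    hlen] at jensen
  exact le_of_mul_le_mul_right (by linarith) hlen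

theorem mul_le_integral_of_le_on_Icc {g : ℝ → ℝ} {a b c d K : ℝ} (hac : a ≤ c) (hcd : c ≤ d)
    (hdb : d ≤ b) (hg : IntervalIntegrable g volume a b) (hg_nonneg : ∀ t ∈ Set.Icc a b, 0 ≤ g t)
    (hg_ge : ∀ t ∈ Set.Icc c d, K ≤ g t) : (d - c) * K ≤ ∫ t in a..b, g t := by
  have hg_cd : IntervalIntegrable g volume c d := hg.mono_set <| by
    simpa [Set.uIcc_of_le, hcd, hac.trans (hcd.trans hdb)] using Set.Icc_subset_Icc hac hdb
  calc (d - c) * K = ∫ _ in c..d, K := by simp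
    _ ≤ ∫ t in c..d, g t :=
      intervalIntegral.integral_mono_on hcd intervalIntegrable_const hg_cd hg_ge
    _ ≤ ∫ t in a..b, g t :=
      intervalIntegral.integral_mono_interval hac hcd hdb
        ((ae_restrict_mem measurableSet_Ioc).mono fun t ht =>
          hg_nonneg t (Set.Ioc_subset_Icc_self ht)) hg

variable {F : Type*} [NormedAddCommGroup F]

theorem periodic_deriv_s11 [NormedSpace ℝ F] {q : ℝ → F} {T : ℝ} (hq : Periodic q T) :
    Periodic (deriv q) T := fun t => by
  rw [← deriv_comp_add_const, hq.funext]

variable [NormedSpace ℝ F] {q : ℝ → F}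

theorem norm_sub_sq_le_mul_integral (hq : ContDiff ℝ 1 q) {s t : ℝ} (hst : s ≤ t) :
    ‖q t - q s‖ ^ 2 ≤ (t - s) * ∫ x in s..t, ‖deriv q x‖ ^ 2 := by
  have hdq : Continuous (deriv q) := hq.continuous_deriv_one
  have displacement_le : ‖q t - q s‖ ≤ ∫ x in s..t, ‖deriv q x‖ :=
    norm_sub_le_integral_of_norm_deriv_le_of_le hst hq.continuous.continuousOn
      (hq.differentiable one_ne_zero).differentiableOn (by simp) (hdq.norm.intervalIntegrable _ _)
  calc ‖q t - q s‖ ^ 2 ≤ (∫ x in s..t, ‖deriv q x‖) ^ 2 := by gcongr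
    _ ≤ _ := sq_intervalIntegral_le hst (hdq.norm.intervalIntegrable _ _)
      ((hdq.norm.pow 2).intervalIntegrable _ _)

theorem norm_sub_sq_le_mul_integral_of_mem_Icc (hq : ContDiff ℝ 1 q) {a b t : ℝ}
    (ht : t ∈ Set.Icc a b) :
    ‖q t - q a‖ ^ 2 ≤ (t - a) * ∫ x in a..b, ‖deriv q x‖ ^ 2 := by
  refine (norm_sub_sq_le_mul_integral hq ht.1).trans
    (mul_le_mul_of_nonneg_left ?_ (sub_nonneg.2 ht.1))
  exact intervalIntegral.integral_mono_interval le_rfl ht.1 ht.2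
    (.of_forall fun x => sq_nonneg _) ((hq.continuous_deriv_one.norm.pow 2).intervalIntegrable _ _)

theorem norm_le_two_mul_of_mul_integral_le (hq : ContDiff ℝ 1 q) {a b t : ℝ}
    (ht : t ∈ Set.Icc a b)
    (hE : (t - a) * ∫ x in a..b, ‖deriv q x‖ ^ 2 ≤ ‖q a‖ ^ 2) : ‖q t‖ ≤ 2 * ‖q a‖ := by
  have hclose : ‖q t - q a‖ ≤ ‖q a‖ :=
    le_of_sq_le_sq ((norm_sub_sq_le_mul_integral_of_mem_Icc hq ht).trans hE) (norm_nonneg _)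
  calc ‖q t‖ ≤ ‖q a‖ + ‖q t - q a‖ := norm_le_norm_add_norm_sub' _ _
    _ ≤ 2 * ‖q a‖ := by linarith

theorem four_mul_norm_sq_le_of_antiperiodic (hq : ContDiff ℝ 1 q) {c : ℝ} (hc : 0 ≤ c)
    (hanti : Antiperiodic q c) {t b : ℝ} (hb : t + c ≤ b) :
    4 * ‖q t‖ ^ 2 ≤ c * ∫ x in t..b, ‖deriv q x‖ ^ 2 := by
  have hdouble : ‖q (t + c) - q t‖ = 2 * ‖q t‖ := by
    rw [hanti, ← neg_add', norm_neg, ← two_smul ℝ, norm_smul, Real.norm_two]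
  calc 4 * ‖q t‖ ^ 2 = ‖q (t + c) - q t‖ ^ 2 := by rw [hdouble]; ring
    _ ≤ _ := by
      simpa using norm_sub_sq_le_mul_integral_of_mem_Icc hq
        (⟨le_add_of_nonneg_right hc, hb⟩ : t + c ∈ Set.Icc t b)

/- `E = ∫ ‖q̇‖²` bounds the time `‖q a‖² / E` spent in the ball of radius `2 ‖q a‖` from below; the
product of that time with `E` no longer depends on `E`. -/
theorem mul_rpow_le_integral_norm_deriv_sq_mul_integral (hq : ContDiff ℝ 1 q) {a b : ℝ}
    (hab : a ≤ b) (hq_ne : ∀ t ∈ Set.Icc a b, q t ≠ 0)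
    (hlong : ‖q a‖ ^ 2 ≤ (b - a) * ∫ t in a..b, ‖deriv q t‖ ^ 2)
    {g : ℝ → ℝ} (hg : IntervalIntegrable g volume a b) (hg_nonneg : ∀ t ∈ Set.Icc a b, 0 ≤ g t)
    {c α : ℝ} (hc : 0 ≤ c) (hα : 0 ≤ α)
    (hg_ge : ∀ t ∈ Set.Icc a b, ‖q t‖ ≤ 2 * ‖q a‖ → c * ‖q t‖ ^ (-α) ≤ g t) :
    c * 2 ^ (-α) * ‖q a‖ ^ (2 - α) ≤ (∫ t in a..b, ‖deriv q t‖ ^ 2) * ∫ t in a..b, g t := by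
  set E := ∫ t in a..b, ‖deriv q t‖ ^ 2
  set δ := ‖q a‖
  have hδ : 0 < δ := norm_pos_iff.2 (hq_ne a (Set.left_mem_Icc.2 hab))
  have hE : 0 < E :=
    pos_of_mul_pos_right ((pow_pos hδ 2).trans_le hlong) (sub_nonneg.2 hab)
  set τ := δ ^ 2 / E
  have hτ : 0 ≤ τ := by positivity
  have hτE : τ * E = δ ^ 2 := div_mul_cancel₀ _ hE.ne'
  have hτb : a + τ ≤ b := by
    have : τ ≤ b - a := (div_le_iff₀ hE).2 hlong
    linarith
  have hg_τ : ∀ t ∈ Set.Icc a (a + τ), c * (2 * δ) ^ (-α) ≤ g t := fun t ht => by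
    have htb : t ∈ Set.Icc a b := ⟨ht.1, ht.2.trans hτb⟩
    have hnear : ‖q t‖ ≤ 2 * δ := by
      refine norm_le_two_mul_of_mul_integral_le hq htb (le_of_le_of_eq ?_ hτE)
      exact mul_le_mul_of_nonneg_right (sub_le_iff_le_add'.2 ht.2) hE.le
    exact (mul_le_mul_of_nonneg_left (Real.rpow_le_rpow_of_nonpos
      (norm_pos_iff.2 (hq_ne t htb)) hnear (neg_nonpos.2 hα)) hc).trans (hg_ge t htb hnear)
  have hτ_le : τ * (c * (2 * δ) ^ (-α)) ≤ ∫ t in a..b, g t := by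
    simpa only [add_sub_cancel_left] using
      mul_le_integral_of_le_on_Icc le_rfl (by linarith) hτb hg hg_nonneg hg_τ
  calc c * 2 ^ (-α) * δ ^ (2 - α) = τ * E * (c * (2 * δ) ^ (-α)) := by
        rw [hτE, Real.mul_rpow two_pos.le hδ.le, sub_eq_add_neg, Real.rpow_add hδ, Real.rpow_two]
        ring
    _ = E * (τ * (c * (2 * δ) ^ (-α))) := by ring
    _ ≤ E * ∫ t in a..b, g t := by gcongr

theorem mul_rpow_le_integral_norm_deriv_sq_mul_integral_of_antiperiodic (hq : ContDiff ℝ 1 q)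
    {T : ℝ} (hT : 0 ≤ T) (hanti : Antiperiodic q (T / 2)) (hq_ne : ∀ t, q t ≠ 0)
    {g : ℝ → ℝ} (hg : Continuous g) (hg_per : Periodic g T) (hg_nonneg : ∀ t, 0 ≤ g t)
    {c α : ℝ} (hc : 0 ≤ c) (hα : 0 ≤ α) (t₀ : ℝ)
    (hg_ge : ∀ t, ‖q t‖ ≤ 2 * ‖q t₀‖ → c * ‖q t‖ ^ (-α) ≤ g t) :
    c * 2 ^ (-α) * ‖q t₀‖ ^ (2 - α)
      ≤ (∫ t in (0 : ℝ)..T, ‖deriv q t‖ ^ 2) * ∫ t in (0 : ℝ)..T, g t := by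
  have hq_per : Periodic q T := by simpa [mul_div_cancel₀] using hanti.periodic_two_mul
  have hspeed_per : Periodic (fun t => ‖deriv q t‖ ^ 2) T :=
    (periodic_deriv_s11 hq_per).comp fun v => ‖v‖ ^ 2
  have hspeed_int := hspeed_per.intervalIntegral_add_eq 0 t₀
  have hg_int := hg_per.intervalIntegral_add_eq 0 t₀
  rw [zero_add] at hspeed_int hg_int
  rw [hspeed_int, hg_int]
  refine mul_rpow_le_integral_norm_deriv_sq_mul_integral hq (by linarith) (fun t _ => hq_ne t) ?_
    (hg.intervalIntegrable _ _) (fun t _ => hg_nonneg t) hc hα fun t _ => hg_ge t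
  have hdouble := four_mul_norm_sq_le_of_antiperiodic hq (by positivity : 0 ≤ T / 2) hanti
    (by linarith : t₀ + T / 2 ≤ t₀ + T)
  linarith [sq_nonneg ‖q t₀‖]

end PathEstimates

section NBody

variable {ι E : Type*} [Fintype ι] [NormedAddCommGroup E]

theorem reducedMass_mul_norm_sub_sq_le_sum {m : ι → ℝ} (hm : ∀ l, 0 < m l) (v : ι → E) {i j : ι}
    (hij : i ≠ j) :
    m i * m j / (m i + m j) * ‖v i - v j‖ ^ 2 ≤ ∑ l, m l * ‖v l‖ ^ 2 := by
  classical
  have hmi := hm i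
  have hmj := hm j
  calc m i * m j / (m i + m j) * ‖v i - v j‖ ^ 2
      ≤ m i * m j / (m i + m j) * (‖v i‖ + ‖v j‖) ^ 2 := by gcongr; exact norm_sub_le _ _
    _ ≤ m i * ‖v i‖ ^ 2 + m j * ‖v j‖ ^ 2 := by
      rw [div_mul_eq_mul_div, div_le_iff₀ (by positivity)]
      linarith [sq_nonneg (m i * ‖v i‖ - m j * ‖v j‖)]
    _ = ∑ l ∈ {i, j}, m l * ‖v l‖ ^ 2 := by rw [sum_pair hij]
    _ ≤ ∑ l, m l * ‖v l‖ ^ 2 :=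
      sum_le_univ_sum_of_nonneg fun l => mul_nonneg (hm l).le (sq_nonneg _)

/-- The kinetic factor `∫₀¹ Σ mᵢ |ẇᵢ|² dt` of the action (without the customary `1/2`). -/
noncomputable def kineticIntegral [NormedSpace ℝ E] (m : ι → ℝ) (w : ℝ → ι → E) : ℝ :=
  ∫ t in (0 : ℝ)..1, ∑ i, m i * ‖deriv (fun s => w s i) t‖ ^ 2

theorem reducedMass_mul_integral_le_kineticIntegral [NormedSpace ℝ E] {m : ι → ℝ}
    (hm : ∀ l, 0 < m l) {w : ℝ → ι → E} (hw : ContDiff ℝ 1 w) {i j : ι} (hij : i ≠ j) :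
    m i * m j / (m i + m j) * ∫ t in (0 : ℝ)..1, ‖deriv (fun s => w s i - w s j) t‖ ^ 2
      ≤ kineticIntegral m w := by
  have hwl : ∀ l, ContDiff ℝ 1 fun t => w t l := contDiff_pi.1 hw
  have hdwl : ∀ l, Continuous (deriv fun t => w t l) := fun l => (hwl l).continuous_deriv_one
  have hdiff : Continuous (deriv fun t => w t i - w t j) :=
    ((hwl i).sub (hwl j)).continuous_deriv_one
  rw [← intervalIntegral.integral_const_mul]
  refine intervalIntegral.integral_mono_on zero_le_one
    ((continuous_const.mul (hdiff.norm.pow 2)).intervalIntegrable _ _)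
    ((continuous_finsetSum _ fun l _ =>
      continuous_const.mul ((hdwl l).norm.pow 2)).intervalIntegrable _ _) fun t _ => ?_
  rw [deriv_fun_sub ((hwl i).differentiable one_ne_zero t) ((hwl j).differentiable one_ne_zero t)]
  exact reducedMass_mul_norm_sub_sq_le_sum hm (fun l => deriv (fun s => w s l) t) hij

variable [DecidableEq ι]

/-- The total potential `V(x) = ½ Σ_{i ≠ j} V_{ij}(x_i - x_j)` of a configuration. The diagonal
entries `V i i` never enter, and the off-diagonal ones only matter away from `0` when `x` is
collision-free, that is, injective. -/
noncomputable def totalPotential (V : ι → ι → E → ℝ) (x : ι → E) : ℝ :=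
  (1 / 2) * ∑ i, ∑ j ∈ univ.filter (fun j => j ≠ i), V i j (x i - x j)

theorem totalPotential_le_half_mul {V : ι → ι → E → ℝ} {x : ι → E}
    (hV : ∀ i j, i ≠ j → V i j (x i - x j) ≤ 0) {i j : ι} (hij : i ≠ j) :
    totalPotential V x ≤ 1 / 2 * V i j (x i - x j) := by
  have hterm : ∀ k, ∀ l ∈ univ.filter (fun l => l ≠ k), V k l (x k - x l) ≤ 0 := fun k l hl =>
    hV k l (mem_filter.1 hl).2.symm
  refine mul_le_mul_of_nonneg_left ?_ one_half_pos.le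
  calc ∑ k, ∑ l ∈ univ.filter (fun l => l ≠ k), V k l (x k - x l)
      ≤ ∑ l ∈ univ.filter (fun l => l ≠ i), V i l (x i - x l) :=
        sum_le_single_of_nonpos (fun k _ => sum_nonpos (hterm k)) (mem_univ i)
    _ ≤ V i j (x i - x j) :=
        sum_le_single_of_nonpos (hterm i) (by simpa using hij.symm)

theorem continuousOn_totalPotential {V : ι → ι → E → ℝ}
    (hV : ∀ i j, i ≠ j → ContinuousOn (V i j) {0}ᶜ) :
    ContinuousOn (totalPotential V) {x | Injective x} := by
  refine continuousOn_const.mul (continuousOn_finsetSum _ fun i _ =>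
    continuousOn_finsetSum _ fun j hj => ?_)
  have hij : i ≠ j := (mem_filter.1 hj).2.symm
  exact (hV i j hij).comp (by fun_prop) fun x hx => sub_ne_zero.2 (hx.ne hij)

variable [NormedSpace ℝ E]

/-- The fixed-energy action functional `f(w) = ½ ∫₀¹ Σ mᵢ |ẇᵢ|² dt · ∫₀¹ (h - V(w)) dt`. -/
noncomputable def fixedEnergyAction (m : ι → ℝ) (h : ℝ) (V : ι → ι → E → ℝ) (w : ℝ → ι → E) : ℝ :=
  (1 / 2) * kineticIntegral m w * ∫ t in (0 : ℝ)..1, (h - totalPotential V (w t))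

theorem mul_rpow_le_fixedEnergyAction {m : ι → ℝ} (hm : ∀ l, 0 < m l) {h : ℝ} (hh : 0 ≤ h)
    {V : ι → ι → E → ℝ} (hV : ∀ i j, i ≠ j → ContinuousOn (V i j) {0}ᶜ)
    (hV_nonpos : ∀ i j, i ≠ j → ∀ ξ ≠ 0, V i j ξ ≤ 0)
    {i j : ι} (hij : i ≠ j) {α A r : ℝ} (hα : 0 ≤ α) (hA : 0 ≤ A)
    (hV_sf : ∀ ξ, 0 < ‖ξ‖ → ‖ξ‖ ≤ r → V i j ξ ≤ -A * ‖ξ‖ ^ (-α))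
    {w : ℝ → ι → E} (hw : ContDiff ℝ 1 w) (hanti : Antiperiodic w (1 / 2))
    (hinj : ∀ t, Injective (w t)) (t₀ : ℝ) (hr : 2 * ‖w t₀ i - w t₀ j‖ ≤ r) :
    1 / 2 * (m i * m j / (m i + m j)) * (A / 2 * 2 ^ (-α) * ‖w t₀ i - w t₀ j‖ ^ (2 - α))
      ≤ fixedEnergyAction m h V w := by
  have hq_ne : ∀ {k l}, k ≠ l → ∀ t, w t k - w t l ≠ 0 := fun hkl t =>
    sub_ne_zero.2 ((hinj t).ne hkl)
  have hpot_le : ∀ t, totalPotential V (w t) ≤ 1 / 2 * V i j (w t i - w t j) := fun t =>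
    totalPotential_le_half_mul (fun k l hkl => hV_nonpos k l hkl _ (hq_ne hkl t)) hij
  have hpot_nonneg : ∀ t, 0 ≤ h - totalPotential V (w t) := fun t => by
    linarith [hpot_le t, hV_nonpos i j hij _ (hq_ne hij t)]
  have hpot_cont : Continuous fun t => h - totalPotential V (w t) :=
    continuous_const.sub ((continuousOn_totalPotential hV).comp_continuous hw.continuous hinj)
  have hw_per : Periodic w 1 := by simpa using hanti.periodic_two_mul
  have hq_anti : Antiperiodic (fun t => w t i - w t j) (1 / 2) := fun t => by
    simp only [hanti t, Pi.neg_apply, neg_sub_neg, neg_sub]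
  have hpair := mul_rpow_le_integral_norm_deriv_sq_mul_integral_of_antiperiodic
    (q := fun t => w t i - w t j) ((contDiff_pi.1 hw i).sub (contDiff_pi.1 hw j)) zero_le_one
    hq_anti (hq_ne hij) hpot_cont (hw_per.comp fun x => h - totalPotential V x) hpot_nonneg
    (by positivity : 0 ≤ A / 2) hα t₀
    fun t ht => by linarith [hpot_le t, hV_sf _ (norm_pos_iff.2 (hq_ne hij t)) (ht.trans hr)]
  have hkin := reducedMass_mul_integral_le_kineticIntegral hm hw hij
  have hP : 0 ≤ ∫ t in (0 : ℝ)..1, (h - totalPotential V (w t)) :=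
    intervalIntegral.integral_nonneg zero_le_one fun t _ => hpot_nonneg t
  have hμ : 0 ≤ m i * m j / (m i + m j) :=
    (div_pos (mul_pos (hm i) (hm j)) (add_pos (hm i) (hm j))).le
  set δ := ‖w t₀ i - w t₀ j‖
  set μ := m i * m j / (m i + m j)
  set E := ∫ t in (0 : ℝ)..1, ‖deriv (fun s => w s i - w s j) t‖ ^ 2
  set P := ∫ t in (0 : ℝ)..1, (h - totalPotential V (w t))
  calc 1 / 2 * μ * (A / 2 * 2 ^ (-α) * δ ^ (2 - α)) ≤ 1 / 2 * μ * (E * P) := by gcongr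
    _ = 1 / 2 * (μ * E) * P := by ring
    _ ≤ 1 / 2 * kineticIntegral m w * P := by gcongr

theorem action_blows_up_at_collision_general {κ : Type*} {l : Filter κ}
    {m : ι → ℝ} (hm : ∀ i, 0 < m i) {h : ℝ} (hh : 0 ≤ h)
    {V : ι → ι → E → ℝ} (hV : ∀ i j, i ≠ j → ContinuousOn (V i j) {0}ᶜ)
    (hV_nonpos : ∀ i j, i ≠ j → ∀ ξ ≠ 0, V i j ξ ≤ 0)
    {i₀ j₀ : ι} (hij : i₀ ≠ j₀) {α A r : ℝ} (hα : 2 < α) (hA : 0 < A) (hr : 0 < r)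
    (hV_sf : ∀ ξ, 0 < ‖ξ‖ → ‖ξ‖ ≤ r → V i₀ j₀ ξ ≤ -A * ‖ξ‖ ^ (-α))
    {w : κ → ℝ → ι → E} (hw : ∀ k, ContDiff ℝ 1 (w k)) (hanti : ∀ k, Antiperiodic (w k) (1 / 2))
    (hinj : ∀ k t, Injective (w k t)) {t : κ → ℝ}
    (hcoll : Tendsto (fun k => w k (t k) i₀ - w k (t k) j₀) l (𝓝 0)) :
    Tendsto (fun k => fixedEnergyAction m h V (w k)) l atTop := by
  set δ : κ → ℝ := fun k => ‖w k (t k) i₀ - w k (t k) j₀‖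
  have hδ : Tendsto δ l (𝓝 0) := tendsto_zero_iff_norm_tendsto_zero.1 hcoll
  have hδ_pos : ∀ k, δ k ∈ Set.Ioi 0 := fun k =>
    norm_pos_iff.2 (sub_ne_zero.2 ((hinj k (t k)).ne hij))
  have hblowup : Tendsto (fun k => δ k ^ (2 - α)) l atTop :=
    (tendsto_rpow_neg_nhdsGT_zero (sub_neg.2 hα)).comp
      (tendsto_nhdsWithin_iff.2 ⟨hδ, .of_forall hδ_pos⟩)
  have hμ : 0 < m i₀ * m j₀ / (m i₀ + m j₀) :=
    div_pos (mul_pos (hm i₀) (hm j₀)) (add_pos (hm i₀) (hm j₀))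
  refine tendsto_atTop_mono' l ?_ ((hblowup.const_mul_atTop
    (by positivity : 0 < A / 2 * 2 ^ (-α))).const_mul_atTop (mul_pos one_half_pos hμ))
  filter_upwards [hδ.eventually_le_const (half_pos hr)] with k hk
  exact mul_rpow_le_fixedEnergyAction hm hh hV hV_nonpos hij (by linarith) hA.le hV_sf (hw k)
    (hanti k) (hinj k) (t k) (by linarith)

end NBody

/-- **Lemma 3.1**: along a bounded-energy sequence of antiperiodic non-collision loops
converging uniformly to a loop with a collision, the fixed-energy functional `f`
blows up to `+∞`. -/
theorem action_blows_up_at_collision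
    (n N : ℕ) (hN : 2 ≤ N)
    (m : Fin N → ℝ) (hm : ∀ i, 0 < m i)
    (h : ℝ) (hh : 0 < h)
    (V : Fin N → Fin N → EuclideanSpace ℝ (Fin n) → ℝ)
    (hV_C1 : ∀ i j, i ≠ j → ContDiffOn ℝ 1 (V i j) {ξ | ξ ≠ 0})
    (hV_nonpos : ∀ i j, i ≠ j → ∀ ξ : EuclideanSpace ℝ (Fin n), ξ ≠ 0 → V i j ξ ≤ 0)
    (α : ℝ) (hα : 2 < α) (A : ℝ) (hA : 0 < A) (r₁ : ℝ) (hr₁ : 0 < r₁)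
    (hV_sf : ∀ i j, i ≠ j → ∀ ξ : EuclideanSpace ℝ (Fin n), 0 < ‖ξ‖ → ‖ξ‖ ≤ r₁ →
      V i j ξ ≤ -A * ‖ξ‖ ^ (-α))
    (Vtot : (Fin N → EuclideanSpace ℝ (Fin n)) → ℝ)
    (hVtot : ∀ X, Vtot X =
      (1/2) * ∑ i, ∑ j ∈ univ.filter (fun j => j ≠ i), V i j (X i - X j))
    (f : (ℝ → Fin N → EuclideanSpace ℝ (Fin n)) → ℝ)
    (hf : ∀ w : ℝ → Fin N → EuclideanSpace ℝ (Fin n), f w =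
      (1/2) * (∫ t in (0:ℝ)..1, ∑ i, m i * ‖deriv (fun s => w s i) t‖ ^ 2)
        * (∫ t in (0:ℝ)..1, (h - Vtot (w t))))
    (u' : ℕ → ℝ → Fin N → EuclideanSpace ℝ (Fin n))
    (hu'_C1 : ∀ k, ContDiff ℝ 1 (u' k))
    (hu'_per : ∀ k, ∀ t : ℝ, u' k (t + 1) = u' k t)
    (hu'_anti : ∀ k, ∀ t : ℝ, ∀ i, u' k (t + 1/2) i = -u' k t i)
    (hu'_noncoll : ∀ k, ∀ t : ℝ, ∀ i j, i ≠ j → u' k t i ≠ u' k t j)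
    (u : ℝ → Fin N → EuclideanSpace ℝ (Fin n))
    (hu_cont : Continuous u)
    (hu_per : ∀ t : ℝ, u (t + 1) = u t)
    (hconv : TendstoUniformlyOn u' u Filter.atTop (Set.Icc 0 1))
    (M : ℝ)
    (hM : ∀ k, (∫ t in (0:ℝ)..1, ∑ i, m i * ‖deriv (fun s => u' k s i) t‖ ^ 2) ≤ M)
    (t₀ : ℝ) (i₀ j₀ : Fin N) (hij : i₀ ≠ j₀) (hcoll : u t₀ i₀ = u t₀ j₀) :
    Filter.Tendsto (fun k => f (u' k)) Filter.atTop Filter.atTop := by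
  obtain rfl : Vtot = totalPotential V := funext hVtot
  obtain rfl : f = fixedEnergyAction m h V := funext hf
  have hlim : Tendsto (u' · t₀) atTop (𝓝 (u t₀)) :=
    tendsto_of_periodic_of_forall_mem_Ico one_pos hu'_per hu_per
      (fun t ht => hconv.tendsto_at (Set.Ico_subset_Icc_self ht)) t₀
  refine action_blows_up_at_collision_general hm hh.le (fun i j hne => (hV_C1 i j hne).continuousOn)
    hV_nonpos hij hα hA hr₁ (hV_sf i₀ j₀ hij) hu'_C1 (fun k t => funext (hu'_anti k t))
    (fun k t i j => not_imp_not.1 (hu'_noncoll k t i j)) (t := fun _ => t₀) ?_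
  simpa [hcoll] using (tendsto_pi_nhds.1 hlim i₀).sub (tendsto_pi_nhds.1 hlim j₀)
end
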